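/- (Theorem 17, Holmstedt-type formula) Let 0 < θ₀ < θ₁ < 1, 0 < q₁, r₀, r₁ ≤ ∞, a₁, b₀, b₁ ∈ SV, and ‖s^{-1/r₁} b₁(s)/a₁(s)‖_{r₁,(1,∞)} < ∞. Put c₁(t) = a₁(t) ‖s^{-1/r₁} b₁(s)/a₁(s)‖_{r₁,(t,∞)} and ρ(t) = t^{θ₁-θ₀} b₀(t)/c₁(t). Then, with constants independent of f and t, for all f ∈ Ā_{θ₀,r₀;b₀} + Ā^𝓛_{θ₁,r₁,b₁,q₁,a₁} and all t > 0: K(ρ(t), f; Ā_{θ₀,r₀;b₀}, Ā^𝓛_{θ₁,r₁,b₁,q₁,a₁}) ≈ ‖u^{-θ₀-1/r₀} b₀(u) K(u, f)‖_{r₀,(0,t)} + ρ(t) ‖ s^{-1/r₁} (b₁(s)/a₁(s)) ‖u^{-θ₁-1/q₁} a₁(u) K(u, f)‖_{q₁,(t,s)} ‖_{r₁,(t,∞)}. -/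

import Mathlib

open MeasureTheory Set ENNReal Filter

noncomputable section

/-- The `L_q` quasi-norm (with respect to Lebesgue measure) of an `ℝ≥0∞`-valued
function over a set of reals; for `q = ∞` it is the essential supremum. -/
def LqNorm (q : ℝ≥0∞) (s : Set ℝ) (g : ℝ → ℝ≥0∞) : ℝ≥0∞ :=
  if q = ∞ then essSup g (volume.restrict s)
  else (∫⁻ t in s, g t ^ q.toReal) ^ q⁻¹.toReal

/-- The weight `s ↦ s ^ (-1/r) * b s`, as an `ℝ≥0∞`-valued function
(`1/∞ = 0` by convention). -/
def svWgt (r : ℝ≥0∞) (b : ℝ → ℝ) : ℝ → ℝ≥0∞ :=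
  fun s => ENNReal.ofReal (s ^ (-(r⁻¹.toReal)) * b s)

/-- `f` and `g` are equivalent on `s`: each is bounded by a constant multiple
of the other there. -/
def EquivOn (s : Set ℝ) (f g : ℝ → ℝ) : Prop :=
  ∃ C : ℝ, 0 < C ∧ ∀ t ∈ s, C⁻¹ * g t ≤ f t ∧ f t ≤ C * g t

/-- A positive measurable function `b` on `(0,∞)` is slowly varying if for every
`ε > 0`, `t ^ ε * b t` is equivalent to a non-decreasing function and
`t ^ (-ε) * b t` is equivalent to a non-increasing function. -/
def SlowlyVarying (b : ℝ → ℝ) : Prop :=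
  AEMeasurable b (volume.restrict (Ioi 0)) ∧ (∀ t ∈ Ioi (0:ℝ), 0 < b t) ∧
    ∀ ε : ℝ, 0 < ε →
      (∃ g : ℝ → ℝ, MonotoneOn g (Ioi 0) ∧ EquivOn (Ioi 0) (fun t => t ^ ε * b t) g) ∧
      (∃ g : ℝ → ℝ, AntitoneOn g (Ioi 0) ∧ EquivOn (Ioi 0) (fun t => t ^ (-ε) * b t) g)

/-- A quasi-Banach space continuously embedded into the ambient (Hausdorff) space `E`,
recorded via its extended-real-valued quasi-norm; the space itself is the set of
vectors of finite quasi-norm. -/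
structure QuasiBanach (E : Type*) [AddCommGroup E] [Module ℝ E] where
  N : E → ℝ≥0∞
  zero : N 0 = 0
  definite : ∀ x, N x = 0 → x = 0
  smul : ∀ (c : ℝ) (x : E), N (c • x) = ENNReal.ofReal |c| * N x
  quasi : ∃ C : ℝ≥0∞, 1 ≤ C ∧ C ≠ ∞ ∧ ∀ x y, N (x + y) ≤ C * (N x + N y)
  complete : ∀ f : ℕ → E,
    (∀ ε : ℝ≥0∞, 0 < ε → ∃ M : ℕ, ∀ m ≥ M, ∀ n ≥ M, N (f m - f n) < ε) →
    (∀ n, N (f n) ≠ ∞) →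
    ∃ g : E, N g ≠ ∞ ∧ Tendsto (fun n => N (f n - g)) atTop (nhds 0)

variable {E : Type*} [AddCommGroup E] [Module ℝ E]

/-- The Peetre K-functional of the couple whose quasi-norms are `N₀`, `N₁`. -/
def Kf (N₀ N₁ : E → ℝ≥0∞) (t : ℝ) (f : E) : ℝ≥0∞ :=
  ⨅ g : E, N₀ g + ENNReal.ofReal t * N₁ (f - g)

/-- The quasi-norm of the real interpolation space `Ā_{θ,q;b}`. -/
def normK (N₀ N₁ : E → ℝ≥0∞) (θ : ℝ) (q : ℝ≥0∞) (b : ℝ → ℝ) (f : E) : ℝ≥0∞ :=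
  LqNorm q (Ioi 0) fun u =>
    ENNReal.ofReal (u ^ (-θ - q⁻¹.toReal) * b u) * Kf N₀ N₁ u f

/-- The quasi-norm of the limiting interpolation space `Ā^𝓛_{σ,r,b,q,a}`. -/
def normL (N₀ N₁ : E → ℝ≥0∞) (σ : ℝ) (r q : ℝ≥0∞) (b a : ℝ → ℝ) (f : E) : ℝ≥0∞ :=
  LqNorm r (Ioi 0) fun t =>
    ENNReal.ofReal (t ^ (-(r⁻¹.toReal)) * (b t / a t)) *
      LqNorm q (Ioo 0 t) fun u =>
        ENNReal.ofReal (u ^ (-σ - q⁻¹.toReal) * a u) * Kf N₀ N₁ u f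

/-- The quasi-norm of the limiting interpolation space `Ā^𝓡_{σ,r,b,q,a}`. -/
def normR (N₀ N₁ : E → ℝ≥0∞) (σ : ℝ) (r q : ℝ≥0∞) (b a : ℝ → ℝ) (f : E) : ℝ≥0∞ :=
  LqNorm r (Ioi 0) fun t =>
    ENNReal.ofReal (t ^ (-(r⁻¹.toReal)) * (b t / a t)) *
      LqNorm q (Ioi t) fun u =>
        ENNReal.ofReal (u ^ (-σ - q⁻¹.toReal) * a u) * Kf N₀ N₁ u f

/-- Two (extended-real-valued) quasi-norms define the same space with
equivalent quasi-norms. -/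
def EquivNorms (nX nY : E → ℝ≥0∞) : Prop :=
  ∃ C : ℝ≥0∞, 0 < C ∧ C ≠ ∞ ∧ ∀ f : E, C⁻¹ * nY f ≤ nX f ∧ nX f ≤ C * nY f

/-! ### Basic facts on `LqNorm` -/

theorem LqNorm_eq_eLpNorm {q : ℝ≥0∞} (hq : 0 < q) (s : Set ℝ) (g : ℝ → ℝ≥0∞) :
    LqNorm q s g = eLpNorm g q (volume.restrict s) := by
  unfold LqNorm
  split_ifs with h
  · subst h
    simp [eLpNormEssSup]
  · rw [eLpNorm_eq_lintegral_rpow_enorm_toReal hq.ne' h]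
    simp [ENNReal.toReal_inv]

theorem LqNorm_mono_fun {q : ℝ≥0∞} {s : Set ℝ} (hs : MeasurableSet s) {g h : ℝ → ℝ≥0∞}
    (H : ∀ u ∈ s, g u ≤ h u) : LqNorm q s g ≤ LqNorm q s h := by
  have hae : ∀ᵐ u ∂(volume.restrict s), g u ≤ h u := ae_restrict_of_forall_mem hs H
  unfold LqNorm
  split_ifs with hq
  · exact essSup_mono_ae hae
  · refine ENNReal.rpow_le_rpow (lintegral_mono_ae ?_) ENNReal.toReal_nonneg
    filter_upwards [hae] with u hu
    exact ENNReal.rpow_le_rpow hu ENNReal.toReal_nonneg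

theorem LqNorm_congr_fun {q : ℝ≥0∞} {s : Set ℝ} (hs : MeasurableSet s) {g h : ℝ → ℝ≥0∞}
    (H : ∀ u ∈ s, g u = h u) : LqNorm q s g = LqNorm q s h :=
  le_antisymm (LqNorm_mono_fun hs fun u hu => (H u hu).le)
    (LqNorm_mono_fun hs fun u hu => (H u hu).ge)

theorem LqNorm_mono_set {q : ℝ≥0∞} {s t : Set ℝ} (hst : s ⊆ t) (g : ℝ → ℝ≥0∞) :
    LqNorm q s g ≤ LqNorm q t g := by
  unfold LqNorm
  split_ifs with hq
  · exact essSup_mono_measure' (Measure.restrict_mono hst le_rfl)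
  · exact ENNReal.rpow_le_rpow (lintegral_mono_set hst) ENNReal.toReal_nonneg

theorem LqNorm_const_mul {q : ℝ≥0∞} (hq : 0 < q) {s : Set ℝ} {g : ℝ → ℝ≥0∞}
    (hg : AEMeasurable g (volume.restrict s)) (c : ℝ≥0∞) :
    LqNorm q s (fun u => c * g u) = c * LqNorm q s g := by
  unfold LqNorm
  split_ifs with h
  · exact ENNReal.essSup_const_mul
  · have hp : 0 < q.toReal := ENNReal.toReal_pos hq.ne' h
    simp_rw [ENNReal.mul_rpow_of_nonneg _ _ hp.le]
    rw [lintegral_const_mul'' _ (hg.pow_const _),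
      ENNReal.mul_rpow_of_nonneg _ _ ENNReal.toReal_nonneg, ← ENNReal.rpow_mul,
      ENNReal.toReal_inv, mul_inv_cancel₀ hp.ne', ENNReal.rpow_one]

theorem LqNorm_const_mul' {q : ℝ≥0∞} (hq : 0 < q) {s : Set ℝ} {g : ℝ → ℝ≥0∞}
    {c : ℝ≥0∞} (hc : c ≠ ∞) :
    LqNorm q s (fun u => c * g u) = c * LqNorm q s g := by
  unfold LqNorm
  split_ifs with h
  · exact ENNReal.essSup_const_mul
  · have hp : 0 < q.toReal := ENNReal.toReal_pos hq.ne' h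
    simp_rw [ENNReal.mul_rpow_of_nonneg _ _ hp.le]
    rw [lintegral_const_mul' _ _ (ENNReal.rpow_ne_top_of_nonneg hp.le hc),
      ENNReal.mul_rpow_of_nonneg _ _ ENNReal.toReal_nonneg, ← ENNReal.rpow_mul,
      ENNReal.toReal_inv, mul_inv_cancel₀ hp.ne', ENNReal.rpow_one]

theorem LqNorm_add {q : ℝ≥0∞} (hq : 0 < q) : ∃ C : ℝ≥0∞, C ≠ ∞ ∧
    ∀ (s : Set ℝ) (g h : ℝ → ℝ≥0∞), AEMeasurable g (volume.restrict s) →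
      AEMeasurable h (volume.restrict s) →
      LqNorm q s (fun u => g u + h u) ≤ C * (LqNorm q s g + LqNorm q s h) := by
  refine ⟨LpAddConst q, (LpAddConst_lt_top q).ne, fun s g h hg hh => ?_⟩
  simp only [LqNorm_eq_eLpNorm hq]
  exact eLpNorm_add_le' hg.aestronglyMeasurable hh.aestronglyMeasurable q

theorem LqNorm_split (q : ℝ≥0∞) : ∃ C : ℝ≥0∞, 1 ≤ C ∧ C ≠ ∞ ∧
    ∀ (t : ℝ) (s s₁ s₂ : Set ℝ), s ⊆ s₁ ∪ s₂ ∪ {t} → ∀ g : ℝ → ℝ≥0∞,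
      LqNorm q s g ≤ C * (LqNorm q s₁ g + LqNorm q s₂ g) := by
  refine ⟨LpAddConst q + 1, by simp, ENNReal.add_ne_top.2 ⟨(LpAddConst_lt_top q).ne, by simp⟩,
    fun t s s₁ s₂ hs g => ?_⟩
  refine (LqNorm_mono_set hs g).trans ?_
  have hnull : volume.restrict (s₁ ∪ s₂ ∪ {t}) = volume.restrict (s₁ ∪ s₂) := by
    refine Measure.restrict_congr_set ?_
    exact union_ae_eq_left_of_ae_eq_empty (by simp)
  unfold LqNorm
  rw [hnull]
  split_ifs with h
  · refine (essSup_le_of_ae_le (essSup g (volume.restrict s₁) + essSup g (volume.restrict s₂))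
      ?_).trans (le_mul_of_one_le_left' (by simp))
    change ∀ᵐ x ∂_, _
    rw [ae_restrict_union_iff]
    constructor
    · filter_upwards [ENNReal.ae_le_essSup (μ := volume.restrict s₁) g] with x hx
      exact hx.trans le_self_add
    · filter_upwards [ENNReal.ae_le_essSup (μ := volume.restrict s₂) g] with x hx
      exact hx.trans le_add_self
  · refine (ENNReal.rpow_le_rpow (lintegral_union_le _ _ _) ENNReal.toReal_nonneg).trans ?_
    rw [ENNReal.toReal_inv]
    refine (ENNReal.rpow_add_le_mul_rpow_add_rpow'' _ _).trans ?_
    gcongr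
    simp

/-! ### The dilation-invariant version -/

/-- The weight `u ^ (-1/q)`. -/
def Pw (q : ℝ≥0∞) (u : ℝ) : ℝ≥0∞ := ENNReal.ofReal (u ^ (-(q⁻¹.toReal)))

/-- The `L_q(du/u)` quasi-norm. -/
def Nq (q : ℝ≥0∞) (s : Set ℝ) (g : ℝ → ℝ≥0∞) : ℝ≥0∞ := LqNorm q s fun u => Pw q u * g u

theorem Pw_meas (q : ℝ≥0∞) : Measurable (Pw q) := by
  unfold Pw
  fun_prop

theorem Nq_mono_fun {q : ℝ≥0∞} {s : Set ℝ} (hs : MeasurableSet s) {g h : ℝ → ℝ≥0∞}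
    (H : ∀ u ∈ s, g u ≤ h u) : Nq q s g ≤ Nq q s h :=
  LqNorm_mono_fun hs fun u hu => by
    have := H u hu
    gcongr

theorem Nq_mono_set {q : ℝ≥0∞} {s t : Set ℝ} (hst : s ⊆ t) (g : ℝ → ℝ≥0∞) :
    Nq q s g ≤ Nq q t g := LqNorm_mono_set hst _

theorem Nq_const_mul {q : ℝ≥0∞} (hq : 0 < q) {s : Set ℝ} {g : ℝ → ℝ≥0∞}
    (hg : AEMeasurable g (volume.restrict s)) (c : ℝ≥0∞) :
    Nq q s (fun u => c * g u) = c * Nq q s g := by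
  unfold Nq
  rw [← LqNorm_const_mul (g := fun u => Pw q u * g u) hq ((Pw_meas q).aemeasurable.mul hg)]
  congr 1
  ext u
  ring

theorem Nq_const_mul' {q : ℝ≥0∞} (hq : 0 < q) {s : Set ℝ} {g : ℝ → ℝ≥0∞}
    {c : ℝ≥0∞} (hc : c ≠ ∞) :
    Nq q s (fun u => c * g u) = c * Nq q s g := by
  unfold Nq
  rw [← LqNorm_const_mul' hq hc]
  congr 1
  ext u
  ring

theorem Nq_add {q : ℝ≥0∞} (hq : 0 < q) : ∃ C : ℝ≥0∞, C ≠ ∞ ∧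
    ∀ (s : Set ℝ) (g h : ℝ → ℝ≥0∞), AEMeasurable g (volume.restrict s) →
      AEMeasurable h (volume.restrict s) →
      Nq q s (fun u => g u + h u) ≤ C * (Nq q s g + Nq q s h) := by
  obtain ⟨C, hC, H⟩ := LqNorm_add hq
  refine ⟨C, hC, fun s g h hg hh => ?_⟩
  have := H s (fun u => Pw q u * g u) (fun u => Pw q u * h u)
    ((Pw_meas q).aemeasurable.mul hg) ((Pw_meas q).aemeasurable.mul hh)
  unfold Nq
  simpa only [mul_add] using this

theorem Nq_split (q : ℝ≥0∞) : ∃ C : ℝ≥0∞, C ≠ ∞ ∧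
    ∀ (t : ℝ) (s s₁ s₂ : Set ℝ), s ⊆ s₁ ∪ s₂ ∪ {t} → ∀ g : ℝ → ℝ≥0∞,
      Nq q s g ≤ C * (Nq q s₁ g + Nq q s₂ g) := by
  obtain ⟨C, -, hC, H⟩ := LqNorm_split q
  exact ⟨C, hC, fun t s s₁ s₂ hs g => H t s s₁ s₂ hs _⟩

theorem Nq_Ioo {q : ℝ≥0∞} (hq : 0 < q) {ε : ℝ} (hε : 0 < ε) : ∃ C : ℝ≥0∞, C ≠ ∞ ∧
    ∀ (t : ℝ), 0 < t → ∀ (g : ℝ → ℝ≥0∞) (M : ℝ≥0∞),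
      (∀ u ∈ Ioo 0 t, g u ≤ M * ENNReal.ofReal ((u / t) ^ ε)) → Nq q (Ioo 0 t) g ≤ C * M := by
  have key : ∃ C : ℝ≥0∞, C ≠ ∞ ∧ ∀ t : ℝ, 0 < t →
      Nq q (Ioo 0 t) (fun u => ENNReal.ofReal ((u / t) ^ ε)) ≤ C := by
    by_cases h : q = ∞
    · refine ⟨1, by simp, fun t ht => ?_⟩
      unfold Nq LqNorm
      rw [if_pos h]
      refine essSup_le_of_ae_le _ (ae_restrict_of_forall_mem measurableSet_Ioo fun u hu => ?_)
      simp only [Pw, h, ENNReal.inv_top, ENNReal.toReal_zero, neg_zero, Real.rpow_zero,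
        ENNReal.ofReal_one, one_mul]
      exact ENNReal.ofReal_le_one.2 (Real.rpow_le_one (div_nonneg hu.1.le ht.le)
        ((div_le_one ht).2 hu.2.le) hε.le)
    · have hp : 0 < q.toReal := ENNReal.toReal_pos hq.ne' h
      set p := q.toReal with hpdef
      refine ⟨(ENNReal.ofReal (1 / (ε * p))) ^ q⁻¹.toReal,
        ENNReal.rpow_ne_top_of_nonneg ENNReal.toReal_nonneg ENNReal.ofReal_ne_top,
        fun t ht => ?_⟩
      unfold Nq LqNorm
      rw [if_neg h]
      refine ENNReal.rpow_le_rpow (le_of_eq ?_) ENNReal.toReal_nonneg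
      have h1 : ∀ u ∈ Ioo (0:ℝ) t, (Pw q u * ENNReal.ofReal ((u / t) ^ ε)) ^ q.toReal
          = ENNReal.ofReal (t ^ (-(ε * p)) * u ^ (ε * p - 1)) := by
        intro u hu
        have hu0 := hu.1
        unfold Pw
        rw [← ENNReal.ofReal_mul (by positivity), ENNReal.ofReal_rpow_of_pos (by positivity)]
        congr 1
        rw [Real.mul_rpow (by positivity) (by positivity), ← Real.rpow_mul hu0.le,
          ← Real.rpow_mul (by positivity), Real.div_rpow hu0.le ht.le, Real.rpow_neg ht.le,
          Real.rpow_sub_one hu0.ne', ENNReal.toReal_inv, ← hpdef,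
          neg_mul, inv_mul_cancel₀ hp.ne', Real.rpow_neg_one]
        field_simp
      rw [setLIntegral_congr_fun measurableSet_Ioo h1]
      have hIntegr : IntegrableOn (fun u : ℝ => u ^ (ε * p - 1)) (Ioo 0 t) :=
        (intervalIntegral.integrableOn_Ioo_rpow_iff ht).2 (by nlinarith [mul_pos hε hp])
      rw [← ofReal_integral_eq_lintegral_ofReal (hIntegr.const_mul _)
        (ae_restrict_of_forall_mem measurableSet_Ioo fun u hu => by
          have := hu.1
          simp only [Pi.zero_apply]
          positivity)]
      congr 1
      rw [integral_const_mul, ← integral_Ioc_eq_integral_Ioo,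
        ← intervalIntegral.integral_of_le ht.le,
        integral_rpow (Or.inl (by nlinarith [mul_pos hε hp])), Real.rpow_neg ht.le]
      have h0 : (0:ℝ) ^ (ε * p - 1 + 1) = 0 := Real.zero_rpow (by rw [sub_add_cancel]; positivity)
      rw [h0, sub_add_cancel, sub_zero]
      have : 0 < t ^ (ε * p) := by positivity
      field_simp
  obtain ⟨C, hC, H⟩ := key
  refine ⟨C, hC, fun t ht g M hg => (Nq_mono_fun measurableSet_Ioo hg).trans ?_⟩
  rw [Nq_const_mul hq (by fun_prop), mul_comm]
  gcongr
  exact H t ht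

theorem Nq_Ioi {q : ℝ≥0∞} (hq : 0 < q) {ε : ℝ} (hε : 0 < ε) : ∃ C : ℝ≥0∞, C ≠ ∞ ∧
    ∀ (t : ℝ), 0 < t → ∀ (g : ℝ → ℝ≥0∞) (M : ℝ≥0∞),
      (∀ u ∈ Ioi t, g u ≤ M * ENNReal.ofReal ((t / u) ^ ε)) → Nq q (Ioi t) g ≤ C * M := by
  have key : ∃ C : ℝ≥0∞, C ≠ ∞ ∧ ∀ t : ℝ, 0 < t →
      Nq q (Ioi t) (fun u => ENNReal.ofReal ((t / u) ^ ε)) ≤ C := by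
    by_cases h : q = ∞
    · refine ⟨1, by simp, fun t ht => ?_⟩
      unfold Nq LqNorm
      rw [if_pos h]
      refine essSup_le_of_ae_le _ (ae_restrict_of_forall_mem measurableSet_Ioi fun u hu => ?_)
      simp only [Pw, h, ENNReal.inv_top, ENNReal.toReal_zero, neg_zero, Real.rpow_zero,
        ENNReal.ofReal_one, one_mul]
      have hu0 : 0 < u := ht.trans hu
      exact ENNReal.ofReal_le_one.2 (Real.rpow_le_one (div_nonneg ht.le hu0.le)
        ((div_le_one hu0).2 (le_of_lt hu)) hε.le)
    · have hp : 0 < q.toReal := ENNReal.toReal_pos hq.ne' h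
      set p := q.toReal with hpdef
      refine ⟨(ENNReal.ofReal (1 / (ε * p))) ^ q⁻¹.toReal,
        ENNReal.rpow_ne_top_of_nonneg ENNReal.toReal_nonneg ENNReal.ofReal_ne_top,
        fun t ht => ?_⟩
      unfold Nq LqNorm
      rw [if_neg h]
      refine ENNReal.rpow_le_rpow (le_of_eq ?_) ENNReal.toReal_nonneg
      have h1 : ∀ u ∈ Ioi t, (Pw q u * ENNReal.ofReal ((t / u) ^ ε)) ^ q.toReal
          = ENNReal.ofReal (t ^ (ε * p) * u ^ (-(ε * p) - 1)) := by
        intro u hu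
        have hu0 : 0 < u := ht.trans hu
        unfold Pw
        rw [← ENNReal.ofReal_mul (by positivity), ENNReal.ofReal_rpow_of_pos (by positivity)]
        congr 1
        rw [Real.mul_rpow (by positivity) (by positivity), ← Real.rpow_mul hu0.le,
          ← Real.rpow_mul (by positivity), Real.div_rpow ht.le hu0.le,
          Real.rpow_sub_one hu0.ne', Real.rpow_neg hu0.le (ε * p), ENNReal.toReal_inv, ← hpdef,
          neg_mul, inv_mul_cancel₀ hp.ne', Real.rpow_neg_one]
        field_simp
      rw [setLIntegral_congr_fun measurableSet_Ioi h1]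
      have hlt : -(ε * p) - 1 < -1 := by nlinarith [mul_pos hε hp]
      have hIntegr : IntegrableOn (fun u : ℝ => u ^ (-(ε * p) - 1)) (Ioi t) :=
        integrableOn_Ioi_rpow_of_lt hlt ht
      rw [← ofReal_integral_eq_lintegral_ofReal (hIntegr.const_mul _)
        (ae_restrict_of_forall_mem measurableSet_Ioi fun u hu => by
          have : 0 < u := ht.trans hu
          simp only [Pi.zero_apply]
          positivity)]
      congr 1
      rw [integral_const_mul, integral_Ioi_rpow_of_lt hlt ht, sub_add_cancel,
        Real.rpow_neg ht.le]
      have : 0 < t ^ (ε * p) := by positivity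
      field_simp
  obtain ⟨C, hC, H⟩ := key
  refine ⟨C, hC, fun t ht g M hg => (Nq_mono_fun measurableSet_Ioi hg).trans ?_⟩
  rw [Nq_const_mul hq (by fun_prop), mul_comm]
  gcongr
  exact H t ht

theorem Nq_low {q : ℝ≥0∞} (hq : 0 < q) : ∃ C : ℝ≥0∞, C ≠ ∞ ∧
    ∀ (t : ℝ), 0 < t → ∀ (g : ℝ → ℝ≥0∞) (M : ℝ≥0∞),
      (∀ u ∈ Ioo (t / 2) t, M ≤ g u) → M ≤ C * Nq q (Ioo (t / 2) t) g := by
  have key : ∃ c : ℝ≥0∞, c ≠ 0 ∧ c ≠ ∞ ∧ ∀ t : ℝ, 0 < t →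
      c ≤ Nq q (Ioo (t / 2) t) (fun _ => 1) := by
    by_cases h : q = ∞
    · refine ⟨1, by simp, by simp, fun t ht => ?_⟩
      unfold Nq LqNorm
      rw [if_pos h]
      have hne : volume.restrict (Ioo (t / 2) t) ≠ 0 := by
        rw [Ne, Measure.restrict_eq_zero, Real.volume_Ioo]
        simp only [ENNReal.ofReal_eq_zero, not_le]
        linarith
      simp only [Pw, h, ENNReal.inv_top, ENNReal.toReal_zero, neg_zero, Real.rpow_zero,
        ENNReal.ofReal_one, one_mul]
      rw [essSup_const _ hne]
    · have hp : 0 < q.toReal := ENNReal.toReal_pos hq.ne' h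
      set p := q.toReal with hpdef
      refine ⟨(ENNReal.ofReal (1 / 2)) ^ q⁻¹.toReal, ?_,
        ENNReal.rpow_ne_top_of_nonneg ENNReal.toReal_nonneg ENNReal.ofReal_ne_top, fun t ht => ?_⟩
      · refine (ENNReal.rpow_pos (by simp) (by simp)).ne'
      unfold Nq LqNorm
      rw [if_neg h]
      refine ENNReal.rpow_le_rpow ?_ ENNReal.toReal_nonneg
      have h1 : ∀ u ∈ Ioo (t / 2) t, ENNReal.ofReal (t⁻¹) ≤ (Pw q u * 1) ^ q.toReal := by
        intro u hu
        have hu0 : 0 < u := lt_trans (by positivity) hu.1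
        unfold Pw
        rw [mul_one, ENNReal.ofReal_rpow_of_pos (by positivity)]
        refine ENNReal.ofReal_le_ofReal ?_
        rw [← Real.rpow_mul hu0.le, ENNReal.toReal_inv, ← hpdef,
          neg_mul, inv_mul_cancel₀ hp.ne', Real.rpow_neg_one]
        exact inv_anti₀ hu0 hu.2.le
      refine le_trans ?_ (setLIntegral_mono' measurableSet_Ioo h1)
      rw [setLIntegral_const, Real.volume_Ioo, ← ENNReal.ofReal_mul (by positivity)]
      refine ENNReal.ofReal_le_ofReal (le_of_eq ?_)
      field_simp
      ring
  obtain ⟨c, hc, hct, H⟩ := key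
  refine ⟨c⁻¹, by simpa using hc, fun t ht g M hg => ?_⟩
  have h2 : M * Nq q (Ioo (t / 2) t) (fun _ => 1) ≤ Nq q (Ioo (t / 2) t) g := by
    rw [← Nq_const_mul hq (by fun_prop)]
    exact Nq_mono_fun measurableSet_Ioo (by simpa using hg)
  have hcM : M * c ≤ Nq q (Ioo (t / 2) t) g := le_trans (by gcongr; exact H t ht) h2
  calc M = c⁻¹ * (M * c) := by
          rw [mul_comm M c, ← mul_assoc, ENNReal.inv_mul_cancel hc hct, one_mul]
      _ ≤ _ := by gcongr

/-! ### Slowly varying functions -/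

theorem SlowlyVarying.bound {b : ℝ → ℝ} (hb : SlowlyVarying b) {ε : ℝ} (hε : 0 < ε) :
    ∃ C : ℝ, 0 < C ∧ ∀ u t : ℝ, 0 < u → u ≤ t →
      b u ≤ C * (t / u) ^ ε * b t ∧ b t ≤ C * (t / u) ^ ε * b u := by
  obtain ⟨-, hpos, h⟩ := hb
  obtain ⟨⟨g, hg, C, hC, hCg⟩, ⟨g', hg', C', hC', hCg'⟩⟩ := h ε hε
  refine ⟨C * C + C' * C', by positivity, fun u t hu hut => ?_⟩
  have ht : 0 < t := hu.trans_le hut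
  have hbu := hpos u hu
  have hbt := hpos t ht
  have hue : 0 < u ^ ε := by positivity
  have hte : 0 < t ^ ε := by positivity
  have e1 : u ^ ε * b u ≤ C * C * (t ^ ε * b t) := by
    have h1 := (hCg u hu).2
    have h2 := hg (mem_Ioi.2 hu) (mem_Ioi.2 ht) hut
    have h3 := (hCg t ht).1
    have h4 : g t ≤ C * (t ^ ε * b t) := by
      rwa [inv_mul_le_iff₀ hC] at h3
    calc u ^ ε * b u ≤ C * g u := h1
      _ ≤ C * (C * (t ^ ε * b t)) := by gcongr; exact h2.trans h4
      _ = _ := by ring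
  have e2 : t ^ (-ε) * b t ≤ C' * C' * (u ^ (-ε) * b u) := by
    have h1 := (hCg' t ht).2
    have h2 := hg' (mem_Ioi.2 hu) (mem_Ioi.2 ht) hut
    have h3 := (hCg' u hu).1
    have h4 : g' u ≤ C' * (u ^ (-ε) * b u) := by
      rwa [inv_mul_le_iff₀ hC'] at h3
    calc t ^ (-ε) * b t ≤ C' * g' t := h1
      _ ≤ C' * (C' * (u ^ (-ε) * b u)) := by gcongr; exact h2.trans h4
      _ = _ := by ring
  rw [Real.div_rpow ht.le hu.le]
  constructor
  · have : b u ≤ C * C * (t ^ ε / u ^ ε) * b t := by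
      have : b u = (u ^ ε * b u) / u ^ ε := by field_simp
      rw [this]
      calc _ ≤ C * C * (t ^ ε * b t) / u ^ ε := by gcongr
        _ = _ := by ring
    refine this.trans ?_
    gcongr
    nlinarith [mul_pos hC' hC']
  · rw [Real.rpow_neg ht.le, Real.rpow_neg hu.le] at e2
    have : b t ≤ C' * C' * (t ^ ε / u ^ ε) * b u := by
      have : b t = ((t ^ ε)⁻¹ * b t) * t ^ ε := by field_simp
      rw [this]
      calc _ ≤ C' * C' * ((u ^ ε)⁻¹ * b u) * t ^ ε := by gcongr
        _ = _ := by ring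
    refine this.trans ?_
    gcongr
    nlinarith [mul_pos hC hC]

/-- The function `u ^ (-θ) * b u`. -/
def Bw (θ : ℝ) (b : ℝ → ℝ) (u : ℝ) : ℝ≥0∞ := ENNReal.ofReal (u ^ (-θ) * b u)

theorem Bw_pos {b : ℝ → ℝ} (hb : SlowlyVarying b) (θ : ℝ) {u : ℝ} (hu : 0 < u) :
    Bw θ b u ≠ 0 := by
  have := hb.2.1 u hu
  unfold Bw
  simp only [ne_eq, ENNReal.ofReal_eq_zero, not_le]
  positivity

theorem Bw_ne_top {b : ℝ → ℝ} (θ : ℝ) {u : ℝ} : Bw θ b u ≠ ∞ := ENNReal.ofReal_ne_top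

theorem Bw_meas {b : ℝ → ℝ} (hb : SlowlyVarying b) (θ : ℝ) :
    AEMeasurable (Bw θ b) (volume.restrict (Ioi 0)) := by
  have := hb.1
  unfold Bw
  fun_prop

/-- doubling -/
theorem Bw_dbl {b : ℝ → ℝ} (hb : SlowlyVarying b) {θ : ℝ} (hθ : 0 < θ) :
    ∃ C : ℝ≥0∞, C ≠ ∞ ∧ ∀ t u : ℝ, 0 < t → u ∈ Ioo (t / 2) t → Bw θ b t ≤ C * Bw θ b u := by
  obtain ⟨C, hC, H⟩ := hb.bound one_pos
  refine ⟨ENNReal.ofReal (C * 2), ENNReal.ofReal_ne_top, fun t u ht hu => ?_⟩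
  have hu0 : 0 < u := lt_trans (by positivity) hu.1
  have hbu := hb.2.1 u hu0
  have h1 := (H u t hu0 hu.2.le).2
  unfold Bw
  rw [← ENNReal.ofReal_mul (by positivity)]
  refine ENNReal.ofReal_le_ofReal ?_
  rw [Real.rpow_one] at h1
  have h2 : t / u ≤ 2 := by
    rw [div_le_iff₀ hu0]; linarith [hu.1]
  have h3 : t ^ (-θ) ≤ u ^ (-θ) :=
    Real.rpow_le_rpow_of_nonpos hu0 hu.2.le (by linarith)
  calc t ^ (-θ) * b t ≤ u ^ (-θ) * (C * (t / u) * b u) := by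
        have : 0 < b t := hb.2.1 t ht
        gcongr
    _ ≤ u ^ (-θ) * (C * 2 * b u) := by gcongr
    _ = _ := by ring

theorem Bw_dec {b : ℝ → ℝ} (hb : SlowlyVarying b) {θ : ℝ} (hθ : 0 < θ) :
    ∃ C : ℝ≥0∞, C ≠ ∞ ∧ ∀ t u : ℝ, 0 < t → t ≤ u →
      Bw θ b u ≤ C * Bw θ b t * ENNReal.ofReal ((t / u) ^ (θ / 2)) := by
  obtain ⟨C, hC, H⟩ := hb.bound (half_pos hθ)
  refine ⟨ENNReal.ofReal C, ENNReal.ofReal_ne_top, fun t u ht htu => ?_⟩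
  have hu : 0 < u := ht.trans_le htu
  have hbt := hb.2.1 t ht
  have h1 := (H t u ht htu).2
  unfold Bw
  rw [← ENNReal.ofReal_mul (by positivity), ← ENNReal.ofReal_mul (by positivity)]
  refine ENNReal.ofReal_le_ofReal ?_
  calc u ^ (-θ) * b u ≤ u ^ (-θ) * (C * (u / t) ^ (θ / 2) * b t) := by gcongr
    _ = C * b t * (u ^ (-θ) * (u / t) ^ (θ / 2)) := by ring
    _ = C * b t * (t ^ (-θ) * (t / u) ^ (θ / 2)) := by
        congr 1
        have e : -θ = -(θ / 2) + -(θ / 2) := by ring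
        rw [Real.div_rpow hu.le ht.le, Real.div_rpow ht.le hu.le, e, Real.rpow_add hu,
          Real.rpow_add ht, Real.rpow_neg hu.le, Real.rpow_neg ht.le]
        have : 0 < u ^ (θ / 2) := by positivity
        have : 0 < t ^ (θ / 2) := by positivity
        field_simp
    _ = _ := by ring

theorem Bw_inc {b : ℝ → ℝ} (hb : SlowlyVarying b) {θ : ℝ} (hθ : θ < 1) :
    ∃ C : ℝ≥0∞, C ≠ ∞ ∧ ∀ t u : ℝ, 0 < u → u ≤ t →
      ENNReal.ofReal u * Bw θ b u ≤
        C * (ENNReal.ofReal t * Bw θ b t) * ENNReal.ofReal ((u / t) ^ ((1 - θ) / 2)) := by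
  obtain ⟨C, hC, H⟩ := hb.bound (half_pos (sub_pos.2 hθ))
  refine ⟨ENNReal.ofReal C, ENNReal.ofReal_ne_top, fun t u hu hut => ?_⟩
  have ht : 0 < t := hu.trans_le hut
  have hbt := hb.2.1 t ht
  have hbu := hb.2.1 u hu
  have h1 := (H u t hu hut).1
  unfold Bw
  rw [← ENNReal.ofReal_mul (by positivity), ← ENNReal.ofReal_mul (by positivity),
    ← ENNReal.ofReal_mul (by positivity), ← ENNReal.ofReal_mul (by positivity)]
  refine ENNReal.ofReal_le_ofReal ?_
  have e : ∀ x : ℝ, 0 < x → x * x ^ (-θ) = x ^ ((1 - θ) / 2) * x ^ ((1 - θ) / 2) := by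
    intro x hx
    nth_rw 1 [← Real.rpow_one x]
    rw [← Real.rpow_add hx, ← Real.rpow_add hx]
    congr 1
    ring
  calc u * (u ^ (-θ) * b u) ≤ u * (u ^ (-θ) * (C * (t / u) ^ ((1 - θ) / 2) * b t)) := by gcongr
    _ = C * b t * ((u * u ^ (-θ)) * (t / u) ^ ((1 - θ) / 2)) := by ring
    _ = C * b t * ((t * t ^ (-θ)) * (u / t) ^ ((1 - θ) / 2)) := by
        congr 1
        rw [e u hu, e t ht, Real.div_rpow hu.le ht.le, Real.div_rpow ht.le hu.le]
        have : 0 < u ^ ((1 - θ) / 2) := by positivity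
        have : 0 < t ^ ((1 - θ) / 2) := by positivity
        field_simp
    _ = _ := by ring

theorem Bw_cross {a b : ℝ → ℝ} (ha : SlowlyVarying a) (hb : SlowlyVarying b) {θ₀ θ₁ : ℝ}
    (hθ : θ₀ < θ₁) :
    ∃ C : ℝ≥0∞, C ≠ ∞ ∧ ∀ t u : ℝ, 0 < u → u ≤ t →
      Bw θ₀ b u * Bw θ₁ a t ≤
        C * (Bw θ₀ b t * Bw θ₁ a u) * ENNReal.ofReal ((u / t) ^ ((θ₁ - θ₀) / 2)) := by
  have hε : 0 < (θ₁ - θ₀) / 4 := by linarith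
  obtain ⟨C, hC, H⟩ := hb.bound hε
  obtain ⟨C', hC', H'⟩ := ha.bound hε
  refine ⟨ENNReal.ofReal (C * C'), ENNReal.ofReal_ne_top, fun t u hu hut => ?_⟩
  have ht : 0 < t := hu.trans_le hut
  have hbt := hb.2.1 t ht
  have hbu := hb.2.1 u hu
  have hat := ha.2.1 t ht
  have hau := ha.2.1 u hu
  have h1 := (H u t hu hut).1
  have h2 := (H' u t hu hut).2
  unfold Bw
  rw [← ENNReal.ofReal_mul (by positivity), ← ENNReal.ofReal_mul (by positivity),
    ← ENNReal.ofReal_mul (by positivity), ← ENNReal.ofReal_mul (by positivity)]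
  refine ENNReal.ofReal_le_ofReal ?_
  set δ := (θ₁ - θ₀) / 4 with hδ
  have e0 : -θ₀ = -θ₁ + 4 * δ := by rw [hδ]; ring
  have e1 : (θ₁ - θ₀) / 2 = δ + δ := by rw [hδ]; ring
  have e2 : 4 * δ = δ + δ + (δ + δ) := by ring
  calc u ^ (-θ₀) * b u * (t ^ (-θ₁) * a t)
      ≤ u ^ (-θ₀) * (C * (t / u) ^ δ * b t) * (t ^ (-θ₁) * (C' * (t / u) ^ δ * a u)) := by
        gcongr
    _ = C * C' * (b t * a u) * (u ^ (-θ₀) * t ^ (-θ₁) * ((t / u) ^ δ * (t / u) ^ δ)) := by ring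
    _ = C * C' * (b t * a u) * (t ^ (-θ₀) * u ^ (-θ₁) * ((u / t) ^ ((θ₁ - θ₀) / 2))) := by
        congr 1
        rw [e1, e0, e2, Real.rpow_add hu, Real.rpow_add ht, Real.rpow_add (div_pos hu ht),
          Real.rpow_add hu, Real.rpow_add ht, Real.rpow_add hu, Real.rpow_add ht,
          Real.div_rpow hu.le ht.le, Real.div_rpow ht.le hu.le]
        have : 0 < u ^ δ := by positivity
        have : 0 < t ^ δ := by positivity
        field_simp
    _ = _ := by ring

/-- The quotient weight. -/
def Dw (a b : ℝ → ℝ) (u : ℝ) : ℝ≥0∞ := ENNReal.ofReal (b u / a u)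

theorem Dw_meas {a b : ℝ → ℝ} (ha : SlowlyVarying a) (hb : SlowlyVarying b) :
    AEMeasurable (Dw a b) (volume.restrict (Ioi 0)) := by
  have := ha.1
  have := hb.1
  unfold Dw
  fun_prop

theorem Dw_pos {a b : ℝ → ℝ} (ha : SlowlyVarying a) (hb : SlowlyVarying b) {u : ℝ} (hu : 0 < u) :
    Dw a b u ≠ 0 := by
  have := ha.2.1 u hu
  have := hb.2.1 u hu
  unfold Dw
  simp only [ne_eq, ENNReal.ofReal_eq_zero, not_le]
  positivity

theorem Dw_bound {a b : ℝ → ℝ} (ha : SlowlyVarying a) (hb : SlowlyVarying b) :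
    ∃ C : ℝ≥0∞, C ≠ ∞ ∧ ∀ u t : ℝ, 0 < u → u ≤ t →
      Dw a b u ≤ C * ENNReal.ofReal ((t / u) ^ 2) * Dw a b t ∧
      Dw a b t ≤ C * ENNReal.ofReal ((t / u) ^ 2) * Dw a b u := by
  obtain ⟨C, hC, H⟩ := hb.bound one_pos
  obtain ⟨C', hC', H'⟩ := ha.bound one_pos
  refine ⟨ENNReal.ofReal (C * C'), ENNReal.ofReal_ne_top, fun u t hu hut => ?_⟩
  have ht : 0 < t := hu.trans_le hut
  have hbt := hb.2.1 t ht
  have hbu := hb.2.1 u hu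
  have hat := ha.2.1 t ht
  have hau := ha.2.1 u hu
  obtain ⟨h1, h2⟩ := H u t hu hut
  obtain ⟨h3, h4⟩ := H' u t hu hut
  rw [Real.rpow_one] at h1 h2 h3 h4
  unfold Dw
  rw [← ENNReal.ofReal_mul (by positivity), ← ENNReal.ofReal_mul (by positivity),
    ← ENNReal.ofReal_mul (by positivity)]
  constructor
  · refine ENNReal.ofReal_le_ofReal ?_
    rw [div_le_iff₀ hau]
    calc b u ≤ C * (t / u) * b t := h1
      _ = C * (t / u) * (b t / a t) * a t := by field_simp
      _ ≤ C * (t / u) * (b t / a t) * (C' * (t / u) * a u) := by gcongr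
      _ = _ := by ring
  · refine ENNReal.ofReal_le_ofReal ?_
    rw [div_le_iff₀ hat]
    calc b t ≤ C * (t / u) * b u := h2
      _ = C * (t / u) * (b u / a u) * a u := by field_simp
      _ ≤ C * (t / u) * (b u / a u) * (C' * (t / u) * a t) := by gcongr
      _ = _ := by ring

theorem Dw_mul_Bw {a b : ℝ → ℝ} (ha : SlowlyVarying a) (hb : SlowlyVarying b) (θ : ℝ) {u : ℝ}
    (hu : 0 < u) : Dw a b u * Bw θ a u = Bw θ b u := by
  have h1 := ha.2.1 u hu
  have h2 := hb.2.1 u hu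
  unfold Dw Bw
  rw [← ENNReal.ofReal_mul (by positivity)]
  congr 1
  field_simp

/-- The tail `‖s ^ (-1/r) b(s)/a(s)‖_{r,(t,∞)}`. -/
def Rt (r : ℝ≥0∞) (a b : ℝ → ℝ) (t : ℝ) : ℝ≥0∞ := Nq r (Ioi t) (Dw a b)

theorem Rt_anti (r : ℝ≥0∞) (a b : ℝ → ℝ) {u t : ℝ} (h : u ≤ t) : Rt r a b t ≤ Rt r a b u :=
  Nq_mono_set (Ioi_subset_Ioi h) _

theorem Dw_le_Rt {a b : ℝ → ℝ} (ha : SlowlyVarying a) (hb : SlowlyVarying b) {r : ℝ≥0∞}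
    (hr : 0 < r) : ∃ C : ℝ≥0∞, C ≠ ∞ ∧ ∀ t : ℝ, 0 < t → Dw a b t ≤ C * Rt r a b t := by
  obtain ⟨C, hC, H⟩ := Dw_bound ha hb
  obtain ⟨C', hC', H'⟩ := Nq_low hr
  refine ⟨C' * (C * 4), by finiteness, fun t ht => ?_⟩
  have h1 := H' (2 * t) (by positivity) (fun u => C * 4 * Dw a b u) (Dw a b t) ?_
  · refine h1.trans ?_
    rw [Nq_const_mul' hr (by finiteness), ← mul_assoc]
    gcongr
    refine Nq_mono_set (fun u hu => ?_) _
    have := hu.1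
    simp only [mem_Ioi]
    linarith
  · intro u hu
    have hu1 : t < u := by linarith [hu.1]
    refine (H t u ht hu1.le).1.trans ?_
    gcongr
    have : (u / t) ^ 2 ≤ 4 := by
      have h0 : 0 ≤ u / t := by
        have := ht.trans hu1
        positivity
      have : u / t ≤ 2 := by rw [div_le_iff₀ ht]; exact hu.2.le
      nlinarith
    simpa using ENNReal.ofReal_le_ofReal this

theorem Rt_ne_zero {a b : ℝ → ℝ} (ha : SlowlyVarying a) (hb : SlowlyVarying b) {r : ℝ≥0∞}
    (hr : 0 < r) {t : ℝ} (ht : 0 < t) : Rt r a b t ≠ 0 := by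
  obtain ⟨C, hC, H⟩ := Dw_le_Rt ha hb hr
  intro h
  have := H t ht
  rw [h, mul_zero] at this
  exact Dw_pos ha hb ht (le_antisymm this (zero_le))

theorem Rt_ne_top {a b : ℝ → ℝ} (ha : SlowlyVarying a) (hb : SlowlyVarying b) {r : ℝ≥0∞}
    (hr : 0 < r) (h1 : Rt r a b 1 ≠ ∞) {t : ℝ} (ht : 0 < t) : Rt r a b t ≠ ∞ := by
  by_cases h : 1 ≤ t
  · exact ne_top_of_le_ne_top h1 (Rt_anti r a b h)
  push Not at h
  obtain ⟨C, hC, H⟩ := Nq_split r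
  obtain ⟨C1, hC1, H1⟩ := Nq_Ioo hr one_pos
  obtain ⟨C2, hC2, H2⟩ := Dw_bound ha hb
  have hs := H 1 (Ioi t) (Ioo t 1) (Ioi 1) (fun u hu => by
    rcases lt_trichotomy u 1 with h | h | h
    · exact Or.inl (Or.inl ⟨hu, h⟩)
    · exact Or.inr h
    · exact Or.inl (Or.inr h)) (Dw a b)
  refine ne_top_of_le_ne_top (ENNReal.mul_ne_top hC (ENNReal.add_ne_top.2 ⟨?_, h1⟩)) hs
  -- the middle part
  have h3 := H1 1 one_pos (fun u => (Ioo t 1).indicator (Dw a b) u)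
    (C2 * ENNReal.ofReal ((1 / t) ^ 2) * Dw a b 1 * ENNReal.ofReal (1 / t)) (fun u hu => by
      by_cases hut : u ∈ Ioo t 1
      · rw [indicator_of_mem hut]
        have hu0 := hu.1
        refine (H2 u 1 hu0 hu.2.le).1.trans ?_
        have e1 : (1 / u) ^ 2 ≤ (1 / t) ^ 2 := by
          have := hut.1.le
          gcongr
        have e2 : 1 ≤ ENNReal.ofReal (1 / t) * ENNReal.ofReal ((u / 1) ^ (1:ℝ)) := by
          rw [← ENNReal.ofReal_mul (by positivity)]
          rw [ENNReal.one_le_ofReal]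
          simp only [div_one, Real.rpow_one]
          rw [div_mul_eq_mul_div, one_mul, one_le_div ht]
          exact hut.1.le
        rw [mul_assoc _ (ENNReal.ofReal (1 / t))]
        refine le_trans ?_ (le_mul_of_one_le_right' e2)
        gcongr
      · rw [indicator_of_notMem hut]
        exact zero_le)
  have h4 : Nq r (Ioo t 1) (Dw a b) ≤ Nq r (Ioo 0 1) (fun u => (Ioo t 1).indicator (Dw a b) u) := by
    refine le_trans (Nq_mono_fun measurableSet_Ioo fun u hu => ?_)
      (Nq_mono_set (Ioo_subset_Ioo_left ht.le) _)
    rw [indicator_of_mem hu]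
  refine ne_top_of_le_ne_top ?_ (h4.trans h3)
  have : Dw a b 1 ≠ ∞ := ENNReal.ofReal_ne_top
  finiteness

/-! ### The K-functional -/

theorem Kf_mono (N₀ N₁ : E → ℝ≥0∞) (f : E) : Monotone (fun u => Kf N₀ N₁ u f) := by
  intro u v h
  unfold Kf
  refine iInf_mono fun g => ?_
  gcongr

theorem Kf_quasiconc (N₀ N₁ : E → ℝ≥0∞) (f : E) {u t : ℝ} (hu : 0 < u) (h : u ≤ t) :
    ENNReal.ofReal u * Kf N₀ N₁ t f ≤ ENNReal.ofReal t * Kf N₀ N₁ u f := by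
  unfold Kf
  have h0 : ENNReal.ofReal t ≠ 0 := by simpa using hu.trans_le h
  rw [ENNReal.mul_iInf_of_ne h0 ENNReal.ofReal_ne_top]
  refine le_iInf fun g => ?_
  refine (mul_le_mul_right (iInf_le _ g) _).trans ?_
  rw [mul_add, mul_add, ← mul_assoc, ← mul_assoc, mul_comm (ENNReal.ofReal u) (ENNReal.ofReal t)]
  gcongr

theorem QuasiBanach.neg (A : QuasiBanach E) (x : E) : A.N (-x) = A.N x := by
  have := A.smul (-1) x
  simpa using this

theorem Kf_add (A₀ A₁ : QuasiBanach E) : ∃ C : ℝ≥0∞, C ≠ ∞ ∧ ∀ (u : ℝ) (x y : E),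
    Kf A₀.N A₁.N u (x + y) ≤ C * (Kf A₀.N A₁.N u x + Kf A₀.N A₁.N u y) := by
  obtain ⟨C₀, h0, h0t, H0⟩ := A₀.quasi
  obtain ⟨C₁, h1, h1t, H1⟩ := A₁.quasi
  refine ⟨C₀ + C₁, by finiteness, fun u x y => ?_⟩
  have hC : C₀ + C₁ ≠ 0 := by
    intro h
    simp only [add_eq_zero] at h
    simp [h.1] at h0
  unfold Kf
  rw [ENNReal.iInf_add, ENNReal.mul_iInf_of_ne hC (by finiteness)]
  refine le_iInf fun g => ?_
  rw [ENNReal.add_iInf, ENNReal.mul_iInf_of_ne hC (by finiteness)]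
  refine le_iInf fun g' => ?_
  refine (iInf_le _ (g + g')).trans ?_
  have e : x + y - (g + g') = (x - g) + (y - g') := by abel
  rw [e]
  calc A₀.N (g + g') + ENNReal.ofReal u * A₁.N ((x - g) + (y - g'))
      ≤ C₀ * (A₀.N g + A₀.N g') + ENNReal.ofReal u * (C₁ * (A₁.N (x - g) + A₁.N (y - g'))) := by
        gcongr
        · exact H0 _ _
        · exact H1 _ _
    _ ≤ (C₀ + C₁) * (A₀.N g + A₀.N g') +
        ENNReal.ofReal u * ((C₀ + C₁) * (A₁.N (x - g) + A₁.N (y - g'))) := by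
        gcongr
        · exact le_self_add
        · exact le_add_self
    _ = _ := by ring

theorem Kf_neg (A₀ A₁ : QuasiBanach E) (u : ℝ) (x : E) :
    Kf A₀.N A₁.N u (-x) = Kf A₀.N A₁.N u x := by
  have key : ∀ x : E, Kf A₀.N A₁.N u (-x) ≤ Kf A₀.N A₁.N u x := by
    intro x
    unfold Kf
    refine le_iInf fun g => (iInf_le _ (-g)).trans ?_
    have e : -x - -g = -(x - g) := by abel
    rw [e, A₀.neg, A₁.neg]
  refine le_antisymm (key x) ?_
  simpa using key (-x)

theorem Kf_zero (A₀ A₁ : QuasiBanach E) (u : ℝ) : Kf A₀.N A₁.N u 0 = 0 := by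
  refine le_antisymm ((iInf_le _ 0).trans ?_) zero_le
  simp [A₀.zero, A₁.zero]

theorem Kf_near (A₀ A₁ : QuasiBanach E) {t : ℝ} (ht : 0 < t) (f : E) : ∃ g : E, ∀ u : ℝ, 0 < u →
    Kf A₀.N A₁.N u g ≤ 2 * Kf A₀.N A₁.N t f ∧
    ENNReal.ofReal t * Kf A₀.N A₁.N u (f - g) ≤ 2 * (ENNReal.ofReal u * Kf A₀.N A₁.N t f) := by
  by_cases hz : Kf A₀.N A₁.N t f = 0
  · refine ⟨f, fun u hu => ⟨?_, ?_⟩⟩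
    · rw [hz, mul_zero, nonpos_iff_eq_zero]
      rcases le_total u t with h | h
      · exact le_antisymm ((Kf_mono _ _ f h).trans hz.le) zero_le
      · have := Kf_quasiconc A₀.N A₁.N f ht h
        rw [hz, mul_zero, nonpos_iff_eq_zero, mul_eq_zero] at this
        rcases this with h | h
        · rw [ENNReal.ofReal_eq_zero] at h
          linarith
        · exact h
    · rw [sub_self, Kf_zero, mul_zero]
      exact zero_le
  by_cases hT : Kf A₀.N A₁.N t f = ∞
  · refine ⟨f, fun u hu => ⟨?_, ?_⟩⟩
    · rw [hT]
      simp
    · rw [sub_self, Kf_zero, mul_zero]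
      exact zero_le
  have hlt : Kf A₀.N A₁.N t f < 2 * Kf A₀.N A₁.N t f := by
    rw [two_mul]
    exact ENNReal.lt_add_right hT hz
  obtain ⟨g, hg⟩ := iInf_lt_iff.1 (show (⨅ g : E, A₀.N g + ENNReal.ofReal t * A₁.N (f - g)) <
    2 * Kf A₀.N A₁.N t f from hlt)
  refine ⟨g, fun u hu => ⟨?_, ?_⟩⟩
  · refine (iInf_le _ g).trans ?_
    rw [sub_self, A₁.zero, mul_zero, add_zero]
    exact le_self_add.trans hg.le
  · have : Kf A₀.N A₁.N u (f - g) ≤ ENNReal.ofReal u * A₁.N (f - g) := by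
      refine (iInf_le _ 0).trans ?_
      rw [A₀.zero, zero_add, sub_zero]
    calc _ ≤ ENNReal.ofReal t * (ENNReal.ofReal u * A₁.N (f - g)) := by gcongr
      _ = ENNReal.ofReal u * (ENNReal.ofReal t * A₁.N (f - g)) := by ring
      _ ≤ ENNReal.ofReal u * (2 * Kf A₀.N A₁.N t f) := by
        gcongr ENNReal.ofReal u * ?_
        exact le_add_self.trans hg.le
      _ = _ := by ring

/-- Near optimal decompositions. -/
theorem Kf_decomp (A₀ A₁ : QuasiBanach E) : ∃ C : ℝ≥0∞, C ≠ ∞ ∧ ∀ (t : ℝ), 0 < t → ∀ f : E,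
    ∃ g : E, ∀ u : ℝ, 0 < u →
      (Kf A₀.N A₁.N u g ≤ C * Kf A₀.N A₁.N t f) ∧
      (ENNReal.ofReal t * Kf A₀.N A₁.N u (f - g) ≤ C * (ENNReal.ofReal u * Kf A₀.N A₁.N t f)) ∧
      (u ≤ t → Kf A₀.N A₁.N u g ≤ C * Kf A₀.N A₁.N u f) ∧
      (t ≤ u → Kf A₀.N A₁.N u (f - g) ≤ C * Kf A₀.N A₁.N u f) := by
  obtain ⟨C, hC, H⟩ := Kf_add A₀ A₁
  refine ⟨2 + C * 3, by finiteness, fun t ht f => ?_⟩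
  obtain ⟨g, hg⟩ := Kf_near A₀ A₁ ht f
  refine ⟨g, fun u hu => ⟨?_, ?_, fun hut => ?_, fun htu => ?_⟩⟩
  · refine (hg u hu).1.trans ?_
    gcongr
    exact le_self_add
  · refine (hg u hu).2.trans ?_
    gcongr
    exact le_self_add
  · have h1 : ENNReal.ofReal t * Kf A₀.N A₁.N u (f - g) ≤
        ENNReal.ofReal t * (2 * Kf A₀.N A₁.N u f) := by
      refine (hg u hu).2.trans ?_
      calc _ ≤ 2 * (ENNReal.ofReal t * Kf A₀.N A₁.N u f) := by
            gcongr 2 * ?_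
            exact Kf_quasiconc _ _ f hu hut
        _ = _ := by ring
    have h2 := (ENNReal.mul_le_mul_iff_right (by simpa using ht) ENNReal.ofReal_ne_top).1 h1
    have h3 := H u f (-(f - g))
    rw [Kf_neg, show f + -(f - g) = g by abel] at h3
    calc _ ≤ C * (Kf A₀.N A₁.N u f + 2 * Kf A₀.N A₁.N u f) := h3.trans (by gcongr)
      _ = C * 3 * Kf A₀.N A₁.N u f := by ring
      _ ≤ _ := by
        gcongr
        exact le_add_self
  · have h2 : Kf A₀.N A₁.N u g ≤ 2 * Kf A₀.N A₁.N u f := by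
      refine (hg u hu).1.trans ?_
      gcongr
      exact Kf_mono _ _ f htu
    have h3 := H u f (-g)
    rw [Kf_neg, ← sub_eq_add_neg] at h3
    calc _ ≤ C * (Kf A₀.N A₁.N u f + 2 * Kf A₀.N A₁.N u f) := h3.trans (by gcongr)
      _ = C * 3 * Kf A₀.N A₁.N u f := by ring
      _ ≤ _ := by
        gcongr
        exact le_add_self

/-! ### Abstract estimates for quasi-concave functions -/

/-- The `K`-type quasi-norm of a function over the set `S`. -/
def XK (θ : ℝ) (b : ℝ → ℝ) (q : ℝ≥0∞) (S : Set ℝ) (k : ℝ → ℝ≥0∞) : ℝ≥0∞ :=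
  Nq q S fun u => Bw θ b u * k u

/-- The `𝓛`-type quasi-norm of a function over the set `S`, inner norms from `c`. -/
def XL (θ : ℝ) (a b : ℝ → ℝ) (q r : ℝ≥0∞) (c : ℝ) (S : Set ℝ) (k : ℝ → ℝ≥0∞) : ℝ≥0∞ :=
  Nq r S fun s => Dw a b s * XK θ a q (Ioo c s) k

/-- Quasi-concavity. -/
def QC (k : ℝ → ℝ≥0∞) : Prop :=
  Monotone k ∧ ∀ u t : ℝ, 0 < u → u ≤ t → ENNReal.ofReal u * k t ≤ ENNReal.ofReal t * k u

theorem QC_Kf (N₀ N₁ : E → ℝ≥0∞) (f : E) : QC (fun u => Kf N₀ N₁ u f) :=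
  ⟨Kf_mono N₀ N₁ f, fun _ _ hu hut => Kf_quasiconc N₀ N₁ f hu hut⟩

theorem QC.half {k : ℝ → ℝ≥0∞} (hk : QC k) {u t : ℝ} (ht : 0 < t) (hu : u ∈ Ioo (t / 2) t) :
    k t ≤ 2 * k u := by
  have hu0 : 0 < u := lt_trans (by positivity) hu.1
  have h1 := hk.2 u t hu0 hu.2.le
  have h2 : ENNReal.ofReal t ≤ ENNReal.ofReal u * 2 := by
    rw [← ENNReal.ofReal_ofNat 2, ← ENNReal.ofReal_mul hu0.le]
    exact ENNReal.ofReal_le_ofReal (by linarith [hu.1])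
  have h3 : ENNReal.ofReal u * k t ≤ ENNReal.ofReal u * (2 * k u) := by
    refine h1.trans ?_
    rw [← mul_assoc]
    gcongr
  exact (ENNReal.mul_le_mul_iff_right (by simpa using hu0) ENNReal.ofReal_ne_top).1 h3

theorem XK_mono_set {θ : ℝ} {b : ℝ → ℝ} {q : ℝ≥0∞} {S T : Set ℝ} (h : S ⊆ T)
    (k : ℝ → ℝ≥0∞) : XK θ b q S k ≤ XK θ b q T k := Nq_mono_set h _

theorem XK_meas {θ : ℝ} {b : ℝ → ℝ} (hb : SlowlyVarying b) {k : ℝ → ℝ≥0∞} (hk : Monotone k)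
    {S : Set ℝ} (hS : S ⊆ Ioi 0) :
    AEMeasurable (fun u => Bw θ b u * k u) (volume.restrict S) :=
  ((Bw_meas hb θ).mono_measure (Measure.restrict_mono hS le_rfl)).mul hk.measurable.aemeasurable

theorem XL_meas {θ : ℝ} {a b : ℝ → ℝ} (ha : SlowlyVarying a) (hb : SlowlyVarying b) {q : ℝ≥0∞}
    (c : ℝ) (k : ℝ → ℝ≥0∞) {S : Set ℝ} (hS : S ⊆ Ioi 0) :
    AEMeasurable (fun s => Dw a b s * XK θ a q (Ioo c s) k) (volume.restrict S) := by
  refine ((Dw_meas ha hb).mono_measure (Measure.restrict_mono hS le_rfl)).mul ?_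
  have : Monotone fun s => XK θ a q (Ioo c s) k := fun s s' h =>
    XK_mono_set (Ioo_subset_Ioo_right h) k
  exact this.measurable.aemeasurable

theorem XK_add {θ : ℝ} {b : ℝ → ℝ} (hb : SlowlyVarying b) {q : ℝ≥0∞} (hq : 0 < q) {C₀ : ℝ≥0∞}
    (hC₀ : C₀ ≠ ∞) : ∃ C : ℝ≥0∞, C ≠ ∞ ∧ ∀ (S : Set ℝ), MeasurableSet S → S ⊆ Ioi 0 →
      ∀ k k₁ k₂ : ℝ → ℝ≥0∞, Monotone k₁ → Monotone k₂ → (∀ u, k u ≤ C₀ * (k₁ u + k₂ u)) →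
      XK θ b q S k ≤ C * (XK θ b q S k₁ + XK θ b q S k₂) := by
  obtain ⟨C, hC, H⟩ := Nq_add hq
  refine ⟨C₀ * C, by finiteness, fun S hSm hS k k₁ k₂ h1 h2 hk => ?_⟩
  unfold XK
  calc _ ≤ Nq q S (fun u => C₀ * (Bw θ b u * k₁ u + Bw θ b u * k₂ u)) := by
        refine Nq_mono_fun hSm fun u _ => ?_
        calc _ ≤ Bw θ b u * (C₀ * (k₁ u + k₂ u)) := by gcongr; exact hk u
          _ = _ := by ring
    _ = C₀ * Nq q S (fun u => Bw θ b u * k₁ u + Bw θ b u * k₂ u) := Nq_const_mul' hq hC₀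
    _ ≤ C₀ * (C * _) := by
        gcongr
        exact H S _ _ (XK_meas hb h1 hS) (XK_meas hb h2 hS)
    _ = _ := by ring

theorem XL_add {θ : ℝ} {a b : ℝ → ℝ} (ha : SlowlyVarying a) (hb : SlowlyVarying b) {q r : ℝ≥0∞}
    (hq : 0 < q) (hr : 0 < r) {C₀ : ℝ≥0∞}
    (hC₀ : C₀ ≠ ∞) : ∃ C : ℝ≥0∞, C ≠ ∞ ∧ ∀ (t : ℝ), 0 < t →
      ∀ k k₁ k₂ : ℝ → ℝ≥0∞, Monotone k₁ → Monotone k₂ → (∀ u, k u ≤ C₀ * (k₁ u + k₂ u)) →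
      XL θ a b q r t (Ioi t) k ≤ C * (XL θ a b q r t (Ioi t) k₁ + XL θ a b q r t (Ioi t) k₂) := by
  obtain ⟨C, hC, H⟩ := Nq_add hr
  obtain ⟨C', hC', H'⟩ := XK_add (θ := θ) ha hq hC₀
  refine ⟨C' * C, by finiteness, fun t ht k k₁ k₂ h1 h2 hk => ?_⟩
  unfold XL
  have hS : Ioi t ⊆ Ioi 0 := Ioi_subset_Ioi ht.le
  calc _ ≤ Nq r (Ioi t) (fun s => C' * (Dw a b s * XK θ a q (Ioo t s) k₁ +
            Dw a b s * XK θ a q (Ioo t s) k₂)) := by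
        refine Nq_mono_fun measurableSet_Ioi fun s _ => ?_
        have := H' (Ioo t s) measurableSet_Ioo (fun u hu => ht.trans hu.1) k k₁ k₂ h1 h2 hk
        calc _ ≤ Dw a b s * (C' * (XK θ a q (Ioo t s) k₁ + XK θ a q (Ioo t s) k₂)) := by gcongr
          _ = _ := by ring
    _ = C' * Nq r (Ioi t) (fun s => Dw a b s * XK θ a q (Ioo t s) k₁ +
            Dw a b s * XK θ a q (Ioo t s) k₂) := Nq_const_mul' hr hC'
    _ ≤ C' * (C * _) := by
        gcongr
        exact H _ _ _ (XL_meas ha hb t k₁ hS) (XL_meas ha hb t k₂ hS)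
    _ = _ := by ring

theorem XK_low {θ : ℝ} (hθ : 0 < θ) {b : ℝ → ℝ} (hb : SlowlyVarying b) {q : ℝ≥0∞} (hq : 0 < q) :
    ∃ C : ℝ≥0∞, C ≠ ∞ ∧ ∀ k : ℝ → ℝ≥0∞, QC k → ∀ t : ℝ, 0 < t →
      Bw θ b t * k t ≤ C * XK θ b q (Ioo 0 t) k := by
  obtain ⟨C, hC, H⟩ := Bw_dbl hb hθ
  obtain ⟨C', hC', H'⟩ := Nq_low hq
  refine ⟨C' * (C * 2), by finiteness, fun k hk t ht => ?_⟩
  have h1 := H' t ht (fun u => C * 2 * (Bw θ b u * k u)) (Bw θ b t * k t) (fun u hu => by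
    have e1 := H t u ht hu
    have e2 := hk.half ht hu
    calc _ ≤ (C * Bw θ b u) * (2 * k u) := by gcongr
      _ = _ := by ring)
  refine h1.trans ?_
  rw [Nq_const_mul' hq (by finiteness), ← mul_assoc]
  gcongr
  exact Nq_mono_set (Ioo_subset_Ioo_left (by positivity)) _

theorem XL_low {θ : ℝ} (hθ : 0 < θ) {a b : ℝ → ℝ} (ha : SlowlyVarying a) (hb : SlowlyVarying b)
    {q r : ℝ≥0∞} (hq : 0 < q) (hr : 0 < r) :
    ∃ C : ℝ≥0∞, C ≠ ∞ ∧ ∀ k : ℝ → ℝ≥0∞, QC k → ∀ t : ℝ, 0 < t →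
      Bw θ a t * k t * Rt r a b t ≤ C * XL θ a b q r 0 (Ioi 0) k := by
  obtain ⟨C, hC, H⟩ := XK_low hθ ha hq
  refine ⟨C, hC, fun k hk t ht => ?_⟩
  have hS : Ioi t ⊆ Ioi 0 := Ioi_subset_Ioi ht.le
  calc _ ≤ C * XK θ a q (Ioo 0 t) k * Rt r a b t := mul_le_mul_left (H k hk t ht) _
    _ = C * (XK θ a q (Ioo 0 t) k * Nq r (Ioi t) (Dw a b)) := by rw [mul_assoc]; rfl
    _ ≤ _ := by
      gcongr
      rw [← Nq_const_mul hr ((Dw_meas ha hb).mono_measure (Measure.restrict_mono hS le_rfl))]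
      unfold XL
      refine le_trans (Nq_mono_fun measurableSet_Ioi fun s hs => ?_) (Nq_mono_set hS _)
      rw [mul_comm]
      gcongr
      exact XK_mono_set (Ioo_subset_Ioo_right (le_of_lt hs)) k

/-- The function `ρ`. -/
def rho (θ₀ θ₁ : ℝ) (r : ℝ≥0∞) (a b b₀ : ℝ → ℝ) (t : ℝ) : ℝ≥0∞ :=
  Bw θ₀ b₀ t / (Bw θ₁ a t * Rt r a b t)

theorem rho_mul {θ₀ θ₁ : ℝ} {r : ℝ≥0∞} (hr : 0 < r) {a b : ℝ → ℝ} (b₀ : ℝ → ℝ)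
    (ha : SlowlyVarying a)
    (hb : SlowlyVarying b) (h1 : Rt r a b 1 ≠ ∞) {t : ℝ} (ht : 0 < t) :
    rho θ₀ θ₁ r a b b₀ t * (Bw θ₁ a t * Rt r a b t) = Bw θ₀ b₀ t := by
  unfold rho
  exact ENNReal.div_mul_cancel (mul_ne_zero (Bw_pos ha θ₁ ht) (Rt_ne_zero ha hb hr ht))
    (ENNReal.mul_ne_top (Bw_ne_top θ₁) (Rt_ne_top ha hb hr h1 ht))

theorem low_h {θ₀ θ₁ : ℝ} (hθ₀ : 0 < θ₀) (hθ : θ₀ < θ₁) {q r r₀ : ℝ≥0∞} (hq : 0 < q)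
    (hr : 0 < r) (hr₀ : 0 < r₀) {a b b₀ : ℝ → ℝ} (ha : SlowlyVarying a) (hb : SlowlyVarying b)
    (hb₀ : SlowlyVarying b₀) (h1 : Rt r a b 1 ≠ ∞) :
    ∃ C : ℝ≥0∞, C ≠ ∞ ∧ ∀ k : ℝ → ℝ≥0∞, QC k → ∀ t : ℝ, 0 < t →
      XK θ₀ b₀ r₀ (Ioo 0 t) k ≤
        C * (rho θ₀ θ₁ r a b b₀ t * XL θ₁ a b q r 0 (Ioi 0) k) := by
  obtain ⟨C, hC, H⟩ := XL_low (hθ₀.trans hθ) ha hb hq hr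
  obtain ⟨C', hC', H'⟩ := Bw_cross ha hb₀ hθ
  obtain ⟨C₂, hC₂, H₂⟩ := Nq_Ioo hr₀ (half_pos (sub_pos.2 hθ))
  refine ⟨C₂ * (C * C'), by finiteness, fun k hk t ht => ?_⟩
  rw [mul_assoc]
  refine H₂ t ht _ _ fun u hu => ?_
  set T := XL θ₁ a b q r 0 (Ioi 0) k
  set e := ENNReal.ofReal ((u / t) ^ ((θ₁ - θ₀) / 2))
  have hd0 : Bw θ₁ a t * Rt r a b t ≠ 0 :=
    mul_ne_zero (Bw_pos ha θ₁ ht) (Rt_ne_zero ha hb hr ht)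
  have hdt : Bw θ₁ a t * Rt r a b t ≠ ∞ :=
    ENNReal.mul_ne_top (Bw_ne_top θ₁) (Rt_ne_top ha hb hr h1 ht)
  have hau0 := Bw_pos ha θ₁ hu.1
  have step : (Bw θ₀ b₀ u * k u) * (Bw θ₁ a t * Rt r a b t) ≤ C * C' * T * e * Bw θ₀ b₀ t := by
    calc _ = (Bw θ₀ b₀ u * Bw θ₁ a t) * (k u * Rt r a b t) := by ring
      _ ≤ (C' * (Bw θ₀ b₀ t * Bw θ₁ a u) * e) * (k u * Rt r a b u) := by
        gcongr ?_ * (k u * ?_)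
        · exact H' t u hu.1 hu.2.le
        · exact Rt_anti r a b hu.2.le
      _ = C' * Bw θ₀ b₀ t * e * (Bw θ₁ a u * k u * Rt r a b u) := by ring
      _ ≤ C' * Bw θ₀ b₀ t * e * (C * T) := by
        exact mul_le_mul_right (H k hk u hu.1) _
      _ = _ := by ring
  have := (ENNReal.le_div_iff_mul_le (Or.inl hd0) (Or.inl hdt)).2 step
  refine this.trans (le_of_eq ?_)
  unfold rho
  simp only [div_eq_mul_inv]
  ring

theorem low_g {θ₀ θ₁ : ℝ} (hθ₀ : 0 < θ₀) (hθ : θ₀ < θ₁) {q r r₀ : ℝ≥0∞} (hq : 0 < q)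
    (hr : 0 < r) (hr₀ : 0 < r₀) {a b b₀ : ℝ → ℝ} (ha : SlowlyVarying a) (hb : SlowlyVarying b)
    (hb₀ : SlowlyVarying b₀) (h1 : Rt r a b 1 ≠ ∞) :
    ∃ C : ℝ≥0∞, C ≠ ∞ ∧ ∀ k : ℝ → ℝ≥0∞, QC k → ∀ t : ℝ, 0 < t →
      rho θ₀ θ₁ r a b b₀ t * XL θ₁ a b q r t (Ioi t) k ≤ C * XK θ₀ b₀ r₀ (Ioi 0) k := by
  obtain ⟨C, hC, H⟩ := XK_low hθ₀ hb₀ hr₀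
  obtain ⟨C', hC', H'⟩ := Bw_cross ha hb₀ hθ
  obtain ⟨C₂, hC₂, H₂⟩ := Nq_Ioi hq (half_pos (sub_pos.2 hθ))
  refine ⟨C₂ * (C * C'), by finiteness, fun k hk t ht => ?_⟩
  set X := XK θ₀ b₀ r₀ (Ioi 0) k with hX
  have hb0 := Bw_pos hb₀ θ₀ ht
  have hbt : Bw θ₀ b₀ t ≠ ∞ := Bw_ne_top θ₀
  set M := C * C' * X * Bw θ₁ a t / Bw θ₀ b₀ t with hM
  have inner : XK θ₁ a q (Ioi t) k ≤ C₂ * M := by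
    refine H₂ t ht _ _ fun u hu => ?_
    have hu0 : 0 < u := ht.trans hu
    set e := ENNReal.ofReal ((t / u) ^ ((θ₁ - θ₀) / 2))
    have step : (Bw θ₁ a u * k u) * Bw θ₀ b₀ t ≤ C * C' * X * Bw θ₁ a t * e := by
      calc _ = (Bw θ₀ b₀ t * Bw θ₁ a u) * k u := by ring
        _ ≤ (C' * (Bw θ₀ b₀ u * Bw θ₁ a t) * e) * k u := by
          gcongr ?_ * k u
          exact H' u t ht (le_of_lt hu)
        _ = C' * Bw θ₁ a t * e * (Bw θ₀ b₀ u * k u) := by ring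
        _ ≤ C' * Bw θ₁ a t * e * (C * X) := by
          refine mul_le_mul_right ((H k hk u hu0).trans ?_) _
          gcongr
          exact XK_mono_set (fun v hv => hv.1) k
        _ = _ := by ring
    have := (ENNReal.le_div_iff_mul_le (Or.inl hb0) (Or.inl hbt)).2 step
    refine this.trans (le_of_eq ?_)
    rw [hM]
    simp only [div_eq_mul_inv]
    ring
  have outer : XL θ₁ a b q r t (Ioi t) k ≤ C₂ * M * Rt r a b t := by
    have hS : Ioi t ⊆ Ioi 0 := Ioi_subset_Ioi ht.le
    unfold Rt
    rw [← Nq_const_mul hr ((Dw_meas ha hb).mono_measure (Measure.restrict_mono hS le_rfl))]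
    refine Nq_mono_fun measurableSet_Ioi fun s hs => ?_
    rw [mul_comm]
    gcongr
    exact (XK_mono_set (fun v hv => hv.1) k).trans inner
  calc _ ≤ rho θ₀ θ₁ r a b b₀ t * (C₂ * M * Rt r a b t) := by gcongr
    _ = C₂ * (C * C') * X * ((rho θ₀ θ₁ r a b b₀ t * (Bw θ₁ a t * Rt r a b t)) *
          (Bw θ₀ b₀ t)⁻¹) := by
        rw [hM]
        simp only [div_eq_mul_inv]
        ring
    _ = _ := by
        rw [rho_mul hr b₀ ha hb h1 ht, ENNReal.mul_inv_cancel hb0 hbt, mul_one]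

theorem low_hh {θ : ℝ} {a b : ℝ → ℝ} {q r : ℝ≥0∞} {t : ℝ} (ht : 0 < t) (k : ℝ → ℝ≥0∞) :
    XL θ a b q r t (Ioi t) k ≤ XL θ a b q r 0 (Ioi 0) k := by
  unfold XL
  refine le_trans (Nq_mono_fun measurableSet_Ioi fun s _ => ?_)
    (Nq_mono_set (Ioi_subset_Ioi ht.le) _)
  gcongr
  exact XK_mono_set (Ioo_subset_Ioo_left ht.le) k

theorem up_g {θ : ℝ} (hθ : 0 < θ) {q : ℝ≥0∞} (hq : 0 < q) {b : ℝ → ℝ} (hb : SlowlyVarying b)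
    {C₀ : ℝ≥0∞} (hC₀ : C₀ ≠ ∞) :
    ∃ C : ℝ≥0∞, C ≠ ∞ ∧ ∀ k kg : ℝ → ℝ≥0∞, QC k → ∀ t : ℝ, 0 < t →
      (∀ u, 0 < u → kg u ≤ C₀ * k t) → (∀ u, 0 < u → u ≤ t → kg u ≤ C₀ * k u) →
      XK θ b q (Ioi 0) kg ≤ C * XK θ b q (Ioo 0 t) k := by
  obtain ⟨C₁, hC₁, H₁⟩ := Nq_split q
  obtain ⟨C₂, hC₂, H₂⟩ := Nq_Ioi hq (half_pos hθ)
  obtain ⟨C₃, hC₃, H₃⟩ := Bw_dec hb hθ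
  obtain ⟨C₄, hC₄, H₄⟩ := XK_low hθ hb hq
  refine ⟨C₁ * (C₀ + C₂ * (C₀ * C₃ * C₄)), by finiteness, fun k kg hk t ht h1 h2 => ?_⟩
  have hs := H₁ t (Ioi 0) (Ioo 0 t) (Ioi t) (fun u hu => by
    rcases lt_trichotomy u t with h | h | h
    · exact Or.inl (Or.inl ⟨hu, h⟩)
    · exact Or.inr h
    · exact Or.inl (Or.inr h)) (fun u => Bw θ b u * kg u)
  refine hs.trans ?_
  rw [mul_assoc]
  gcongr
  rw [add_mul]
  gcongr
  · unfold XK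
    rw [← Nq_const_mul' hq hC₀]
    refine Nq_mono_fun measurableSet_Ioo fun u hu => ?_
    calc _ ≤ Bw θ b u * (C₀ * k u) := by gcongr; exact h2 u hu.1 hu.2.le
      _ = _ := by ring
  · rw [mul_assoc]
    refine H₂ t ht _ _ fun u hu => ?_
    have hu0 : 0 < u := ht.trans hu
    set e := ENNReal.ofReal ((t / u) ^ (θ / 2))
    calc _ ≤ (C₃ * Bw θ b t * e) * (C₀ * k t) := by
          gcongr
          · exact H₃ t u ht (le_of_lt hu)
          · exact h1 u hu0
      _ = C₃ * C₀ * e * (Bw θ b t * k t) := by ring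
      _ ≤ C₃ * C₀ * e * (C₄ * XK θ b q (Ioo 0 t) k) := by
          exact mul_le_mul_right (H₄ k hk t ht) _
      _ = _ := by ring

theorem up_h {θ₀ θ₁ : ℝ} (hθ₀ : 0 < θ₀) (hθ₁ : θ₁ < 1) {q r r₀ : ℝ≥0∞} (hq : 0 < q)
    (hr : 0 < r) (hr₀ : 0 < r₀) {a b b₀ : ℝ → ℝ} (ha : SlowlyVarying a) (hb : SlowlyVarying b)
    (hb₀ : SlowlyVarying b₀) (h1 : Rt r a b 1 ≠ ∞) {C₀ : ℝ≥0∞} (hC₀ : C₀ ≠ ∞) :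
    ∃ C : ℝ≥0∞, C ≠ ∞ ∧ ∀ k kh : ℝ → ℝ≥0∞, QC k → ∀ t : ℝ, 0 < t →
      (∀ u, 0 < u → ENNReal.ofReal t * kh u ≤ C₀ * (ENNReal.ofReal u * k t)) →
      (∀ u, 0 < u → t ≤ u → kh u ≤ C₀ * k u) →
      rho θ₀ θ₁ r a b b₀ t * XL θ₁ a b q r 0 (Ioi 0) kh ≤
        C * (XK θ₀ b₀ r₀ (Ioo 0 t) k + rho θ₀ θ₁ r a b b₀ t * XL θ₁ a b q r t (Ioi t) k) := by
  have hε := half_pos (sub_pos.2 hθ₁)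
  obtain ⟨S₁, hS₁, Hsr⟩ := Nq_split r
  obtain ⟨S₂, hS₂, Hsq⟩ := Nq_split q
  obtain ⟨P₁, hP₁, Hpa⟩ := Bw_inc ha hθ₁
  obtain ⟨P₂, hP₂, Hpb⟩ := Bw_inc hb hθ₁
  obtain ⟨Q₁, hQ₁, Hq⟩ := Nq_Ioo hq hε
  obtain ⟨Q₂, hQ₂, Hr⟩ := Nq_Ioo hr hε
  obtain ⟨D₁, hD₁, HD⟩ := Dw_le_Rt ha hb hr
  obtain ⟨L₁, hL₁, HL⟩ := XK_low hθ₀ hb₀ hr₀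
  obtain ⟨T₁, hT₁, HT⟩ := Nq_add hr
  set B := Q₁ * (C₀ * P₁) with hB
  have hBt : B ≠ ∞ := by finiteness
  set V := Q₂ * (B * P₂) * D₁ with hV
  have hVt : V ≠ ∞ := by finiteness
  set W := S₂ * (B + C₀) with hW
  have hWt : W ≠ ∞ := by finiteness
  refine ⟨S₁ * (V * L₁ + W * T₁ * (L₁ + 1)), by finiteness, fun k kh hk t ht hh1 hh2 => ?_⟩
  have ht0 : ENNReal.ofReal t ≠ 0 := by simpa using ht
  have htt : ENNReal.ofReal t ≠ ∞ := ENNReal.ofReal_ne_top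
  -- pointwise bound
  have hkh : ∀ u, 0 < u → kh u ≤ C₀ * (k t / ENNReal.ofReal t) * ENNReal.ofReal u := by
    intro u hu
    have := hh1 u hu
    rw [mul_comm] at this
    refine ((ENNReal.le_div_iff_mul_le (Or.inl ht0) (Or.inl htt)).2 this).trans (le_of_eq ?_)
    simp only [div_eq_mul_inv]
    ring
  set m := k t / ENNReal.ofReal t with hm
  have hmt : ENNReal.ofReal t * m = k t := ENNReal.mul_div_cancel ht0 htt
  -- inner norms near zero
  have inner : ∀ s, 0 < s → XK θ₁ a q (Ioo 0 s) kh ≤ B * (m * (ENNReal.ofReal s * Bw θ₁ a s)) := by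
    intro s hs
    have := Hq s hs (fun u => Bw θ₁ a u * kh u)
      (C₀ * P₁ * (m * (ENNReal.ofReal s * Bw θ₁ a s))) (fun u hu => by
        calc _ ≤ Bw θ₁ a u * (C₀ * m * ENNReal.ofReal u) := by gcongr; exact hkh u hu.1
          _ = C₀ * m * (ENNReal.ofReal u * Bw θ₁ a u) := by ring
          _ ≤ C₀ * m * _ := mul_le_mul_right (Hpa s u hu.1 hu.2.le) _
          _ = _ := by ring)
    refine this.trans (le_of_eq ?_)
    rw [hB]
    ring
  -- the part `s < t`
  have part1 : Nq r (Ioo 0 t) (fun s => Dw a b s * XK θ₁ a q (Ioo 0 s) kh) ≤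
      V * (Bw θ₁ a t * Rt r a b t * k t) := by
    have := Hr t ht (fun s => Dw a b s * XK θ₁ a q (Ioo 0 s) kh)
      (B * P₂ * (m * (ENNReal.ofReal t * Bw θ₁ b t))) (fun s hs => by
        calc _ ≤ Dw a b s * (B * (m * (ENNReal.ofReal s * Bw θ₁ a s))) := by
              gcongr; exact inner s hs.1
          _ = B * m * (ENNReal.ofReal s * (Dw a b s * Bw θ₁ a s)) := by ring
          _ = B * m * (ENNReal.ofReal s * Bw θ₁ b s) := by rw [Dw_mul_Bw ha hb θ₁ hs.1]
          _ ≤ B * m * _ := mul_le_mul_right (Hpb t s hs.1 hs.2.le) _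
          _ = _ := by ring)
    refine this.trans ?_
    rw [← Dw_mul_Bw ha hb θ₁ ht]
    calc _ = Q₂ * (B * P₂) * ((ENNReal.ofReal t * m) * (Dw a b t * Bw θ₁ a t)) := by ring
      _ = Q₂ * (B * P₂) * (k t * (Dw a b t * Bw θ₁ a t)) := by rw [hmt]
      _ ≤ Q₂ * (B * P₂) * (k t * ((D₁ * Rt r a b t) * Bw θ₁ a t)) := by
          gcongr; exact HD t ht
      _ = _ := by rw [hV]; ring
  -- the part `t < s`
  have hSub : Ioi t ⊆ Ioi 0 := Ioi_subset_Ioi ht.le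
  have hDm := (Dw_meas ha hb).mono_measure (Measure.restrict_mono hSub (le_refl volume))
  have part2 : Nq r (Ioi t) (fun s => Dw a b s * XK θ₁ a q (Ioo 0 s) kh) ≤
      W * T₁ * (Bw θ₁ a t * Rt r a b t * k t + XL θ₁ a b q r t (Ioi t) k) := by
    calc _ ≤ Nq r (Ioi t) (fun s => W * (Bw θ₁ a t * k t * Dw a b s +
              Dw a b s * XK θ₁ a q (Ioo t s) k)) := by
          refine Nq_mono_fun measurableSet_Ioi fun s hs => ?_
          have e1 := Hsq t (Ioo 0 s) (Ioo 0 t) (Ioo t s) (fun u hu => by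
            rcases lt_trichotomy u t with h | h | h
            · exact Or.inl (Or.inl ⟨hu.1, h⟩)
            · exact Or.inr h
            · exact Or.inl (Or.inr ⟨h, hu.2⟩)) (fun u => Bw θ₁ a u * kh u)
          have e2 : XK θ₁ a q (Ioo 0 t) kh ≤ B * (Bw θ₁ a t * k t) := by
            refine (inner t ht).trans (le_of_eq ?_)
            rw [← hmt]; ring
          have e3 : XK θ₁ a q (Ioo t s) kh ≤ C₀ * XK θ₁ a q (Ioo t s) k := by
            unfold XK
            rw [← Nq_const_mul' hq hC₀]
            refine Nq_mono_fun measurableSet_Ioo fun u hu => ?_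
            calc _ ≤ Bw θ₁ a u * (C₀ * k u) := by
                  gcongr; exact hh2 u (ht.trans hu.1) hu.1.le
              _ = _ := by ring
          calc Dw a b s * XK θ₁ a q (Ioo 0 s) kh
              ≤ Dw a b s * (S₂ * (XK θ₁ a q (Ioo 0 t) kh + XK θ₁ a q (Ioo t s) kh)) := by
                gcongr; exact e1
            _ ≤ Dw a b s * (S₂ * (B * (Bw θ₁ a t * k t) + C₀ * XK θ₁ a q (Ioo t s) k)) := by
                gcongr
            _ ≤ Dw a b s * (S₂ * ((B + C₀) * (Bw θ₁ a t * k t) +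
                  (B + C₀) * XK θ₁ a q (Ioo t s) k)) := by
                gcongr
                · exact le_self_add
                · exact le_add_self
            _ = _ := by rw [hW]; ring
      _ = W * Nq r (Ioi t) (fun s => Bw θ₁ a t * k t * Dw a b s +
              Dw a b s * XK θ₁ a q (Ioo t s) k) := Nq_const_mul' hr hWt
      _ ≤ W * (T₁ * (Nq r (Ioi t) (fun s => Bw θ₁ a t * k t * Dw a b s) +
              XL θ₁ a b q r t (Ioi t) k)) := by
          gcongr
          exact HT _ _ _ (hDm.const_mul _) (XL_meas ha hb t k hSub)
      _ = _ := by
          rw [Nq_const_mul hr hDm]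
          unfold Rt
          ring
  -- conclusion
  have hsplit := Hsr t (Ioi 0) (Ioo 0 t) (Ioi t) (fun u hu => by
    rcases lt_trichotomy u t with h | h | h
    · exact Or.inl (Or.inl ⟨hu, h⟩)
    · exact Or.inr h
    · exact Or.inl (Or.inr h)) (fun s => Dw a b s * XK θ₁ a q (Ioo 0 s) kh)
  set ρ := rho θ₀ θ₁ r a b b₀ t with hρ
  set I₁ := XK θ₀ b₀ r₀ (Ioo 0 t) k with hI₁
  set I₂ := XL θ₁ a b q r t (Ioi t) k with hI₂
  have hρm : ρ * (Bw θ₁ a t * Rt r a b t * k t) ≤ L₁ * I₁ := by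
    rw [← mul_assoc, hρ, rho_mul hr b₀ ha hb h1 ht]
    exact HL k hk t ht
  calc _ ≤ ρ * (S₁ * (V * (Bw θ₁ a t * Rt r a b t * k t) +
          W * T₁ * (Bw θ₁ a t * Rt r a b t * k t + I₂))) := by
        gcongr ρ * ?_
        refine hsplit.trans ?_
        gcongr
    _ = S₁ * (V * (ρ * (Bw θ₁ a t * Rt r a b t * k t)) +
          W * T₁ * (ρ * (Bw θ₁ a t * Rt r a b t * k t) + ρ * I₂)) := by ring
    _ ≤ S₁ * (V * (L₁ * I₁) + W * T₁ * (L₁ * I₁ + ρ * I₂)) := by gcongr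
    _ ≤ S₁ * (V * (L₁ * (I₁ + ρ * I₂)) +
          W * T₁ * (L₁ * (I₁ + ρ * I₂) + (I₁ + ρ * I₂))) := by
        gcongr
        · exact le_self_add
        · exact le_self_add
        · exact le_add_self
    _ = _ := by ring

/-! ### Translation of the statement -/

theorem wgt_eq {θ : ℝ} {q : ℝ≥0∞} {b : ℝ → ℝ} {u : ℝ} (hu : 0 < u) (x : ℝ≥0∞) :
    ENNReal.ofReal (u ^ (-θ - q⁻¹.toReal) * b u) * x = Pw q u * (Bw θ b u * x) := by
  unfold Pw Bw
  rw [← mul_assoc, ← ENNReal.ofReal_mul (by positivity)]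
  congr 2
  rw [sub_eq_add_neg, Real.rpow_add hu]
  ring

theorem LqNorm_eq_XK {θ : ℝ} {q : ℝ≥0∞} {b : ℝ → ℝ} {S : Set ℝ} (hS : MeasurableSet S)
    (hS0 : S ⊆ Ioi 0) (k : ℝ → ℝ≥0∞) :
    LqNorm q S (fun u => ENNReal.ofReal (u ^ (-θ - q⁻¹.toReal) * b u) * k u) = XK θ b q S k :=
  LqNorm_congr_fun hS fun _ hu => wgt_eq (hS0 hu) _

theorem LqNorm_eq_XL {θ : ℝ} {q r : ℝ≥0∞} {a b : ℝ → ℝ} {c : ℝ} (hc : 0 ≤ c)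
    (k : ℝ → ℝ≥0∞) :
    LqNorm r (Ioi c) (fun s => ENNReal.ofReal (s ^ (-(r⁻¹.toReal)) * (b s / a s)) *
      LqNorm q (Ioo c s) (fun u => ENNReal.ofReal (u ^ (-θ - q⁻¹.toReal) * a u) * k u))
      = XL θ a b q r c (Ioi c) k := by
  refine LqNorm_congr_fun measurableSet_Ioi fun s hs => ?_
  have hs0 : 0 < s := hc.trans_lt hs
  rw [LqNorm_eq_XK measurableSet_Ioo (fun u hu => hc.trans_lt hu.1),
    ENNReal.ofReal_mul (by positivity), mul_assoc]
  rfl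

theorem LqNorm_eq_Rt {r : ℝ≥0∞} {a b : ℝ → ℝ} {t : ℝ} (ht : 0 < t) :
    LqNorm r (Ioi t) (svWgt r (fun s => b s / a s)) = Rt r a b t := by
  refine LqNorm_congr_fun measurableSet_Ioi fun s hs => ?_
  have hs0 : 0 < s := ht.trans hs
  unfold svWgt
  rw [ENNReal.ofReal_mul (by positivity)]
  rfl

theorem ofReal_rho {θ₀ θ₁ : ℝ} {r : ℝ≥0∞} (hr : 0 < r) {a b b₀ : ℝ → ℝ} (ha : SlowlyVarying a)
    (hb : SlowlyVarying b) (hb₀ : SlowlyVarying b₀) (h1 : Rt r a b 1 ≠ ∞) {t : ℝ} (ht : 0 < t) :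
    ENNReal.ofReal (t ^ (θ₁ - θ₀) * (b₀ t / (a t * (Rt r a b t).toReal))) =
      rho θ₀ θ₁ r a b b₀ t := by
  have hat := ha.2.1 t ht
  have hbt := hb₀.2.1 t ht
  have hR : 0 < (Rt r a b t).toReal :=
    ENNReal.toReal_pos (Rt_ne_zero ha hb hr ht) (Rt_ne_top ha hb hr h1 ht)
  unfold rho Bw
  conv_rhs => rw [← ENNReal.ofReal_toReal (Rt_ne_top ha hb hr h1 ht)]
  rw [← ENNReal.ofReal_mul (by positivity), ← ENNReal.ofReal_div_of_pos (by positivity)]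
  congr 1
  rw [show θ₁ - θ₀ = -θ₀ + θ₁ by ring, Real.rpow_add ht, Real.rpow_neg ht.le θ₁]
  have : 0 < t ^ θ₁ := by positivity
  field_simp

theorem main_low (A₀ A₁ : QuasiBanach E) {θ₀ θ₁ : ℝ} (hθ₀ : 0 < θ₀) (hθ : θ₀ < θ₁)
    {q r r₀ : ℝ≥0∞} (hq : 0 < q)
    (hr : 0 < r) (hr₀ : 0 < r₀) {a b b₀ : ℝ → ℝ} (ha : SlowlyVarying a) (hb : SlowlyVarying b)
    (hb₀ : SlowlyVarying b₀) (h1 : Rt r a b 1 ≠ ∞) :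
    ∃ C : ℝ≥0∞, C ≠ ∞ ∧ ∀ (f g : E) (t : ℝ), 0 < t →
      XK θ₀ b₀ r₀ (Ioo 0 t) (fun u => Kf A₀.N A₁.N u f) +
        rho θ₀ θ₁ r a b b₀ t * XL θ₁ a b q r t (Ioi t) (fun u => Kf A₀.N A₁.N u f) ≤
      C * (XK θ₀ b₀ r₀ (Ioi 0) (fun u => Kf A₀.N A₁.N u g) +
        rho θ₀ θ₁ r a b b₀ t * XL θ₁ a b q r 0 (Ioi 0) (fun u => Kf A₀.N A₁.N u (f - g))) := by
  obtain ⟨C₀, hC₀, H₀⟩ := Kf_add A₀ A₁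
  obtain ⟨C₁, hC₁, H₁⟩ := XK_add (θ := θ₀) hb₀ hr₀ hC₀
  obtain ⟨C₂, hC₂, H₂⟩ := XL_add (θ := θ₁) ha hb hq hr hC₀
  obtain ⟨C₃, hC₃, H₃⟩ := low_h hθ₀ hθ hq hr hr₀ ha hb hb₀ h1
  obtain ⟨C₄, hC₄, H₄⟩ := low_g hθ₀ hθ hq hr hr₀ ha hb hb₀ h1
  refine ⟨C₁ * (1 + C₃) + C₂ * (C₄ + 1), by finiteness, fun f g t ht => ?_⟩
  have hk : ∀ u, Kf A₀.N A₁.N u f ≤ C₀ * (Kf A₀.N A₁.N u g + Kf A₀.N A₁.N u (f - g)) := by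
    intro u
    have := H₀ u g (f - g)
    rwa [add_sub_cancel] at this
  have hg := QC_Kf A₀.N A₁.N g
  have hh := QC_Kf A₀.N A₁.N (f - g)
  set ρ := rho θ₀ θ₁ r a b b₀ t
  have e1 := H₁ (Ioo 0 t) measurableSet_Ioo (fun u hu => hu.1) (fun u => Kf A₀.N A₁.N u f)
    _ _ hg.1 hh.1 hk
  have e2 := H₂ t ht (fun u => Kf A₀.N A₁.N u f) _ _ hg.1 hh.1 hk
  have e3 := H₃ _ hh t ht
  have e4 := H₄ _ hg t ht
  have e5 : XK θ₀ b₀ r₀ (Ioo 0 t) (fun u => Kf A₀.N A₁.N u g) ≤ _ :=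
    XK_mono_set (T := Ioi 0) (fun u hu => hu.1) _
  have e6 := low_hh (θ := θ₁) (a := a) (b := b) (q := q) (r := r) ht
    (fun u => Kf A₀.N A₁.N u (f - g))
  set X := XK θ₀ b₀ r₀ (Ioi 0) (fun u => Kf A₀.N A₁.N u g)
  set Y := XL θ₁ a b q r 0 (Ioi 0) (fun u => Kf A₀.N A₁.N u (f - g))
  calc _ ≤ C₁ * (X + C₃ * (ρ * Y)) + ρ * (C₂ * (XL θ₁ a b q r t (Ioi t)
            (fun u => Kf A₀.N A₁.N u g) + Y)) := by
        gcongr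
        · exact e1.trans (by gcongr)
        · exact e2.trans (by gcongr)
    _ = C₁ * (X + C₃ * (ρ * Y)) + C₂ * (ρ * XL θ₁ a b q r t (Ioi t)
            (fun u => Kf A₀.N A₁.N u g) + ρ * Y) := by ring
    _ ≤ C₁ * (X + C₃ * (ρ * Y)) + C₂ * (C₄ * X + ρ * Y) := by gcongr
    _ ≤ C₁ * ((X + ρ * Y) + C₃ * (X + ρ * Y)) + C₂ * (C₄ * (X + ρ * Y) + (X + ρ * Y)) := by
        gcongr
        · exact le_self_add
        · exact le_add_self
        · exact le_self_add
        · exact le_add_self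
    _ = _ := by ring

theorem main_up (A₀ A₁ : QuasiBanach E) {θ₀ θ₁ : ℝ} (hθ₀ : 0 < θ₀) (hθ₁ : θ₁ < 1)
    {q r r₀ : ℝ≥0∞} (hq : 0 < q)
    (hr : 0 < r) (hr₀ : 0 < r₀) {a b b₀ : ℝ → ℝ} (ha : SlowlyVarying a) (hb : SlowlyVarying b)
    (hb₀ : SlowlyVarying b₀) (h1 : Rt r a b 1 ≠ ∞) :
    ∃ C : ℝ≥0∞, C ≠ ∞ ∧ ∀ (f : E) (t : ℝ), 0 < t → ∃ g : E,
      XK θ₀ b₀ r₀ (Ioi 0) (fun u => Kf A₀.N A₁.N u g) +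
        rho θ₀ θ₁ r a b b₀ t * XL θ₁ a b q r 0 (Ioi 0) (fun u => Kf A₀.N A₁.N u (f - g)) ≤
      C * (XK θ₀ b₀ r₀ (Ioo 0 t) (fun u => Kf A₀.N A₁.N u f) +
        rho θ₀ θ₁ r a b b₀ t * XL θ₁ a b q r t (Ioi t) (fun u => Kf A₀.N A₁.N u f)) := by
  obtain ⟨C₀, hC₀, H₀⟩ := Kf_decomp A₀ A₁
  obtain ⟨C₁, hC₁, H₁⟩ := up_g hθ₀ hr₀ hb₀ hC₀
  obtain ⟨C₂, hC₂, H₂⟩ := up_h (θ₀ := θ₀) hθ₀ hθ₁ hq hr hr₀ ha hb hb₀ h1 hC₀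
  refine ⟨C₁ + C₂, by finiteness, fun f t ht => ?_⟩
  obtain ⟨g, hg⟩ := H₀ t ht f
  refine ⟨g, ?_⟩
  have hf := QC_Kf A₀.N A₁.N f
  have e1 := H₁ _ (fun u => Kf A₀.N A₁.N u g) hf t ht (fun u hu => (hg u hu).1)
    (fun u hu hut => (hg u hu).2.2.1 hut)
  have e2 := H₂ _ (fun u => Kf A₀.N A₁.N u (f - g)) hf t ht (fun u hu => (hg u hu).2.1)
    (fun u hu hut => (hg u hu).2.2.2 hut)
  rw [add_mul]
  gcongr
  refine e1.trans ?_
  gcongr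
  exact le_self_add

theorem theorem17
    (A₀ A₁ : QuasiBanach E)
    (hne : ∃ x : E, x ≠ 0 ∧ A₀.N x ≠ ∞ ∧ A₁.N x ≠ ∞)
    (θ₀ θ₁ : ℝ) (hθ₀ : 0 < θ₀) (hθ₀₁ : θ₀ < θ₁) (hθ₁ : θ₁ < 1)
    (q₁ r₀ r₁ : ℝ≥0∞) (hq₁ : 0 < q₁) (hr₀ : 0 < r₀) (hr₁ : 0 < r₁)
    (a₁ b₀ b₁ : ℝ → ℝ)
    (h_sv_a₁ : SlowlyVarying a₁)
    (h_sv_b₀ : SlowlyVarying b₀)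
    (h_sv_b₁ : SlowlyVarying b₁)
    (hfin : LqNorm r₁ (Ioi 1) (svWgt r₁ (fun s => b₁ s / a₁ s)) ≠ ∞)
    (c₁ ρ : ℝ → ℝ)
    (hc₁ : ∀ t, c₁ t = a₁ t * (LqNorm r₁ (Ioi t) (svWgt r₁ (fun s => b₁ s / a₁ s))).toReal)
    (hρ : ∀ t, ρ t = t ^ (θ₁ - θ₀) * (b₀ t / c₁ t)) :
    ∃ C : ℝ≥0∞, 0 < C ∧ C ≠ ∞ ∧
      ∀ f : E,
        (∃ f₀ f₁, f = f₀ + f₁ ∧ normK A₀.N A₁.N θ₀ r₀ b₀ f₀ ≠ ∞ ∧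
          normL A₀.N A₁.N θ₁ r₁ q₁ b₁ a₁ f₁ ≠ ∞) →
        ∀ t : ℝ, 0 < t →
          C⁻¹ * (LqNorm r₀ (Ioo 0 t) (fun u =>
              ENNReal.ofReal (u ^ (-θ₀ - r₀⁻¹.toReal) * b₀ u) * Kf A₀.N A₁.N u f) +
            ENNReal.ofReal (ρ t) *
            LqNorm r₁ (Ioi t) (fun s =>
              ENNReal.ofReal (s ^ (-(r₁⁻¹.toReal)) * (b₁ s / a₁ s)) *
                LqNorm q₁ (Ioo t s) (fun u =>
                  ENNReal.ofReal (u ^ (-θ₁ - q₁⁻¹.toReal) * a₁ u) * Kf A₀.N A₁.N u f)))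
              ≤ Kf (normK A₀.N A₁.N θ₀ r₀ b₀) (normL A₀.N A₁.N θ₁ r₁ q₁ b₁ a₁) (ρ t) f ∧
          Kf (normK A₀.N A₁.N θ₀ r₀ b₀) (normL A₀.N A₁.N θ₁ r₁ q₁ b₁ a₁) (ρ t) f
              ≤ C * (LqNorm r₀ (Ioo 0 t) (fun u =>
              ENNReal.ofReal (u ^ (-θ₀ - r₀⁻¹.toReal) * b₀ u) * Kf A₀.N A₁.N u f) +
            ENNReal.ofReal (ρ t) *
            LqNorm r₁ (Ioi t) (fun s =>
              ENNReal.ofReal (s ^ (-(r₁⁻¹.toReal)) * (b₁ s / a₁ s)) *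
                LqNorm q₁ (Ioo t s) (fun u =>
                  ENNReal.ofReal (u ^ (-θ₁ - q₁⁻¹.toReal) * a₁ u) * Kf A₀.N A₁.N u f))) := by
  have hR1 : Rt r₁ a₁ b₁ 1 ≠ ∞ := by
    rw [← LqNorm_eq_Rt one_pos]
    exact hfin
  obtain ⟨C₁, hC₁, H₁⟩ := main_low A₀ A₁ hθ₀ hθ₀₁ hq₁ hr₁ hr₀ h_sv_a₁ h_sv_b₁ h_sv_b₀ hR1
  obtain ⟨C₂, hC₂, H₂⟩ := main_up A₀ A₁ hθ₀ hθ₁ hq₁ hr₁ hr₀ h_sv_a₁ h_sv_b₁ h_sv_b₀ hR1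
  have hC0 : 1 + C₁ + C₂ ≠ 0 := by simp
  have hCt : 1 + C₁ + C₂ ≠ ∞ := by finiteness
  have hX : ∀ g : E, normK A₀.N A₁.N θ₀ r₀ b₀ g =
      XK θ₀ b₀ r₀ (Ioi 0) (fun u => Kf A₀.N A₁.N u g) := fun g =>
    LqNorm_eq_XK measurableSet_Ioi subset_rfl _
  have hY : ∀ g : E, normL A₀.N A₁.N θ₁ r₁ q₁ b₁ a₁ g =
      XL θ₁ a₁ b₁ q₁ r₁ 0 (Ioi 0) (fun u => Kf A₀.N A₁.N u g) := fun g =>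
    LqNorm_eq_XL le_rfl _
  refine ⟨1 + C₁ + C₂, pos_iff_ne_zero.2 hC0, hCt, fun f _ t ht => ?_⟩
  have hρt : ENNReal.ofReal (ρ t) = rho θ₀ θ₁ r₁ a₁ b₁ b₀ t := by
    rw [hρ, hc₁, LqNorm_eq_Rt ht]
    exact ofReal_rho hr₁ h_sv_a₁ h_sv_b₁ h_sv_b₀ hR1 ht
  rw [LqNorm_eq_XK measurableSet_Ioo (fun u hu => hu.1) (fun u => Kf A₀.N A₁.N u f),
    LqNorm_eq_XL ht.le (fun u => Kf A₀.N A₁.N u f), hρt]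
  constructor
  · unfold Kf
    refine le_iInf fun g => ?_
    change _ * (XK θ₀ b₀ r₀ (Ioo 0 t) (fun u => Kf A₀.N A₁.N u f) + _ *
      XL θ₁ a₁ b₁ q₁ r₁ t (Ioi t) (fun u => Kf A₀.N A₁.N u f)) ≤ _
    rw [hX, hY, hρt, ENNReal.inv_mul_le_iff hC0 hCt]
    refine (H₁ f g t ht).trans ?_
    gcongr
    exact le_add_self.trans le_self_add
  · obtain ⟨g, hg⟩ := H₂ f t ht
    have h0 : Kf (normK A₀.N A₁.N θ₀ r₀ b₀) (normL A₀.N A₁.N θ₁ r₁ q₁ b₁ a₁) (ρ t) f ≤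
        normK A₀.N A₁.N θ₀ r₀ b₀ g +
          ENNReal.ofReal (ρ t) * normL A₀.N A₁.N θ₁ r₁ q₁ b₁ a₁ (f - g) := iInf_le _ g
    rw [hX, hY, hρt] at h0
    refine (h0.trans hg).trans ?_
    gcongr
    exact le_add_self

end
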